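/- arXiv:2603.12767 — 13 statements merged into one kernel-verified Lean document; each statement's English description precedes it below -/
import Mathlib

section
/- Let X be a real random variable with a log-concave density, i.e. a density of the form φ(x) = e^{-V(x)} on ℝ with V : ℝ → ℝ convex, and assume E[X²] < ∞. Then the function f_X(t) = E[X·1_{X≤t}]²/P(X ≤ t) + E[X·1_{X>t}]²/P(X > t) has a unique maximizer on the set of t with 0 < P(X ≤ t) < 1. -/
open MeasureTheory Real Set

/-- The two-step objective `f_X(t) = E[X·1_{X≤t}]²/P(X≤t) + E[X·1_{X>t}]²/P(X>t)`. -/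
noncomputable def twoStepObjective {Ω : Type*} [MeasurableSpace Ω]
    (P : Measure Ω) (X : Ω → ℝ) (t : ℝ) : ℝ :=
  (∫ ω in {ω | X ω ≤ t}, X ω ∂P) ^ 2 / (P {ω | X ω ≤ t}).toReal
    + (∫ ω in {ω | t < X ω}, X ω ∂P) ^ 2 / (P {ω | t < X ω}).toReal


structure Good (φ : ℝ → ℝ) : Prop where
  cont : Continuous φ
  pos : ∀ x, 0 < φ x
  int : Integrable φ
  int1 : Integrable (fun x => x * φ x)
  one : ∫ x, φ x = 1
  lc : ∀ z x t, z ≤ x → x ≤ t → φ t * φ z ≤ φ x * φ (z + (t - x))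

noncomputable def FF (φ : ℝ → ℝ) (t : ℝ) : ℝ := ∫ x in Iic t, φ x
noncomputable def AA (φ : ℝ → ℝ) (t : ℝ) : ℝ := ∫ x in Iic t, x * φ x
noncomputable def DD (φ : ℝ → ℝ) (t : ℝ) : ℝ := t - AA φ t / FF φ t

lemma hasDerivAt_Iic {g : ℝ → ℝ} (hg : Continuous g) (hi : Integrable g) (t : ℝ) :
    HasDerivAt (fun t => ∫ x in Iic t, g x) (g t) t := by
  have h : (fun t => ∫ x in Iic t, g x) = fun t => (∫ x in Iic 0, g x) + ∫ x in (0:ℝ)..t, g x := by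
    funext t
    rw [← intervalIntegral.integral_Iic_sub_Iic hi.integrableOn hi.integrableOn]; ring
  rw [h]
  exact ((hg.integral_hasStrictDerivAt 0 t).hasDerivAt).const_add _

lemma tendsto_Iic {g : ℝ → ℝ} (hi : Integrable g) :
    Filter.Tendsto (fun t => ∫ x in Iic t, g x) Filter.atBot (nhds 0) := by
  have h : (fun t => ∫ x in Iic t, g x) = fun t => (∫ x in Iic 0, g x) - ∫ x in t..(0:ℝ), g x := by
    funext t
    rw [← intervalIntegral.integral_Iic_sub_Iic hi.integrableOn hi.integrableOn]; ring
  rw [h]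
  have := (intervalIntegral_tendsto_integral_Iic (f := g) (μ := volume) (0:ℝ) hi.integrableOn
    Filter.tendsto_id).const_sub (∫ x in Iic 0, g x)
  simpa using this

namespace Good
variable {φ : ℝ → ℝ}

lemma cont1 (h : Good φ) : Continuous (fun x => x * φ x) := continuous_id.mul h.cont

lemma hF (h : Good φ) (t : ℝ) : HasDerivAt (FF φ) (φ t) t := hasDerivAt_Iic h.cont h.int t
lemma hA (h : Good φ) (t : ℝ) : HasDerivAt (AA φ) (t * φ t) t := hasDerivAt_Iic h.cont1 h.int1 t

lemma F_strictMono (h : Good φ) : StrictMono (FF φ) :=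
  strictMono_of_hasDerivAt_pos h.hF h.pos

lemma F_nonneg (h : Good φ) (t : ℝ) : 0 ≤ FF φ t :=
  setIntegral_nonneg measurableSet_Iic fun x _ => (h.pos x).le

lemma F_pos (h : Good φ) (t : ℝ) : 0 < FF φ t :=
  (h.F_nonneg (t - 1)).trans_lt (h.F_strictMono (by linarith))

lemma F_le (h : Good φ) (t : ℝ) : FF φ t ≤ 1 := by
  rw [← h.one]
  exact setIntegral_le_integral h.int (Filter.Eventually.of_forall fun x => (h.pos x).le)

lemma F_lt (h : Good φ) (t : ℝ) : FF φ t < 1 :=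
  (h.F_strictMono (show t < t + 1 by linarith)).trans_le (h.F_le _)

lemma H_eq (h : Good φ) (t : ℝ) : t * FF φ t - AA φ t = ∫ x in Iic t, (t - x) * φ x := by
  unfold FF AA
  rw [← integral_const_mul, ← integral_sub (h.int.integrableOn.const_mul t) h.int1.integrableOn]
  congr 1; funext x; ring

lemma H_nonneg (h : Good φ) (t : ℝ) : 0 ≤ t * FF φ t - AA φ t := by
  rw [h.H_eq]
  exact setIntegral_nonneg measurableSet_Iic fun x hx =>
    mul_nonneg (sub_nonneg.2 hx) (h.pos x).le

lemma hH (h : Good φ) (t : ℝ) : HasDerivAt (fun t => t * FF φ t - AA φ t) (FF φ t) t := by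
  have := ((hasDerivAt_id t).mul (h.hF t)).sub (h.hA t)
  refine this.congr_deriv ?_
  simp only [id]; ring

lemma H_pos (h : Good φ) (t : ℝ) : 0 < t * FF φ t - AA φ t :=
  (h.H_nonneg (t - 1)).trans_lt
    (strictMono_of_hasDerivAt_pos h.hH h.F_pos (show t - 1 < t by linarith))

lemma D_eq (h : Good φ) (t : ℝ) : DD φ t = (t * FF φ t - AA φ t) / FF φ t := by
  have := (h.F_pos t).ne'
  unfold DD; field_simp

lemma D_pos (h : Good φ) (t : ℝ) : 0 < DD φ t := by
  rw [h.D_eq]; exact div_pos (h.H_pos t) (h.F_pos t)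

lemma D_ge (h : Good φ) (t : ℝ) : t - (∫ x, x * φ x) ≤ DD φ t := by
  have h1 : t - (∫ x, x * φ x) ≤ t * FF φ t - AA φ t := by
    have e : t - (∫ x, x * φ x) = ∫ x, (t - x) * φ x := by
      have : (fun x => (t - x) * φ x) = fun x => t * φ x - x * φ x := by funext x; ring
      rw [this, integral_sub (h.int.const_mul t) h.int1, integral_const_mul, h.one, mul_one]
    have hi : Integrable (fun x => (t - x) * φ x) := by
      have : (fun x => (t - x) * φ x) = fun x => t * φ x - x * φ x := by funext x; ring
      rw [this]; exact (h.int.const_mul t).sub h.int1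
    rw [e, h.H_eq, ← integral_add_compl (measurableSet_Iic (a := t)) hi]
    have : ∫ x in (Iic t)ᶜ, (t - x) * φ x ≤ 0 := by
      apply setIntegral_nonpos measurableSet_Iic.compl
      intro x hx
      have : t < x := by simpa using hx
      exact mul_nonpos_of_nonpos_of_nonneg (by linarith) (h.pos x).le
    linarith
  refine h1.trans ?_
  rw [h.D_eq, le_div_iff₀ (h.F_pos t)]
  nlinarith [h.H_pos t, h.F_le t]

lemma ratio (h : Good φ) {x t : ℝ} (hxt : x ≤ t) : φ t * FF φ x ≤ φ x * FF φ t := by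
  have e : FF φ t = ∫ z in Iic x, φ (z + (t - x)) := by
    have := (measurePreserving_add_right volume (t - x)).setIntegral_preimage_emb
      (measurableEmbedding_addRight (t - x)) φ (Iic t)
    unfold FF
    rw [← this]
    congr 2
    ext z; simp
  rw [e]; unfold FF
  rw [← integral_const_mul, ← integral_const_mul]
  apply setIntegral_mono_on (h.int.integrableOn.const_mul _)
    ((h.int.comp_add_right (t - x)).integrableOn.const_mul _) measurableSet_Iic
  intro z hz
  exact h.lc z x t hz hxt

lemma key (h : Good φ) (t : ℝ) : φ t * (t * FF φ t - AA φ t) ≤ FF φ t ^ 2 := by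
  have hK : ∀ x, HasDerivAt (fun x => FF φ t * FF φ x - φ t * (x * FF φ x - AA φ x))
      (FF φ t * φ x - φ t * FF φ x) x := fun x =>
    ((h.hF x).const_mul _).sub ((h.hH x).const_mul _)
  have hm : MonotoneOn (fun x => FF φ t * FF φ x - φ t * (x * FF φ x - AA φ x)) (Iic t) := by
    apply monotoneOn_of_deriv_nonneg (convex_Iic t)
    · exact fun x _ => (hK x).continuousAt.continuousWithinAt
    · exact fun x _ => (hK x).differentiableAt.differentiableWithinAt
    · intro x hx
      rw [(hK x).deriv]
      have : x ≤ t := mem_Iic.1 (interior_subset hx)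
      linarith [h.ratio this]
  have hb : ∀ᶠ x in Filter.atBot, φ t * AA φ x ≤
      FF φ t * FF φ t - φ t * (t * FF φ t - AA φ t) := by
    filter_upwards [Filter.eventually_le_atBot t, Filter.eventually_le_atBot 0] with x hx hx0
    have h1 := hm (show x ∈ Iic t from hx) (show t ∈ Iic t from le_refl t) hx
    have h2 : 0 ≤ FF φ t * FF φ x := mul_nonneg (h.F_nonneg _) (h.F_nonneg _)
    have h3 : φ t * (x * FF φ x) ≤ 0 :=
      mul_nonpos_of_nonneg_of_nonpos (h.pos t).le
        (mul_nonpos_of_nonpos_of_nonneg hx0 (h.F_nonneg x))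
    simp only at h1
    linarith
  have hl : Filter.Tendsto (fun x => φ t * AA φ x) Filter.atBot (nhds (φ t * 0)) :=
    (tendsto_Iic h.int1).const_mul _
  have := le_of_tendsto hl hb
  linarith

lemma hD (h : Good φ) (t : ℝ) : HasDerivAt (DD φ) (1 - φ t * DD φ t / FF φ t) t := by
  have := (hasDerivAt_id t).sub ((h.hA t).div (h.hF t) (h.F_pos t).ne')
  refine this.congr_deriv ?_
  have := (h.F_pos t).ne'
  unfold DD; field_simp
  try ring

lemma D_mono (h : Good φ) : Monotone (DD φ) := by
  apply monotone_of_hasDerivAt_nonneg h.hD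
  intro t
  have := h.key t
  have h2 := h.F_pos t
  show 0 ≤ 1 - φ t * DD φ t / FF φ t
  rw [h.D_eq, sub_nonneg, div_le_one h2, mul_div_assoc', div_le_iff₀ h2]
  linarith

lemma const (h : Good φ) {a b : ℝ} (hab : DD φ a = DD φ b) {p q : ℝ} (hp : a < p)
    (hpq : p < q) (hq : q < b) : φ p < φ q := by
  have hc : ∀ x, a ≤ x → x ≤ b → DD φ x = DD φ a := fun x h1 h2 =>
    le_antisymm (hab ▸ h.D_mono h2) (h.D_mono h1)
  have hz : ∀ x, a < x → x < b → φ x * DD φ a = FF φ x := by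
    intro x h1 h2
    have he : DD φ =ᶠ[nhds x] fun _ => DD φ a := by
      filter_upwards [Ioo_mem_nhds h1 h2] with y hy using hc y hy.1.le hy.2.le
    have h3 := ((hasDerivAt_const x (DD φ a)).congr_of_eventuallyEq he).unique (h.hD x)
    rw [hc x h1.le h2.le] at h3
    have := (h.F_pos x).ne'
    field_simp at h3
    linarith
  have h1 := hz p hp (hpq.trans hq)
  have h2 := hz q (hp.trans hpq) hq
  have h3 := h.F_strictMono hpq
  rw [← h1, ← h2] at h3
  exact lt_of_mul_lt_mul_right h3 (h.D_pos a).le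

lemma refl (h : Good φ) : Good (fun x => φ (-x)) where
  cont := h.cont.comp continuous_neg
  pos x := h.pos _
  int := h.int.comp_neg
  int1 := by simpa using h.int1.comp_neg.neg
  one := by rw [integral_neg_eq_self (f := φ) (μ := volume)]; exact h.one
  lc z x t hz hx := by
    have := h.lc (-t) (-x) (-z) (by linarith) (by linarith)
    have e : -t + (-z - -x) = -(z + (t - x)) := by ring
    rw [e] at this
    linarith

lemma F_refl (h : Good φ) (t : ℝ) : FF (fun x => φ (-x)) (-t) = 1 - FF φ t := by
  unfold FF
  rw [integral_comp_neg_Iic (-t) φ, neg_neg, ← h.one,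
    ← intervalIntegral.integral_Iic_add_Ioi (b := t) h.int.integrableOn h.int.integrableOn]
  ring

lemma A_refl (h : Good φ) (t : ℝ) :
    AA (fun x => φ (-x)) (-t) = - ((∫ x, x * φ x) - AA φ t) := by
  unfold AA
  have := integral_comp_neg_Iic (-t) (fun x => x * φ x)
  simp only [neg_mul, integral_neg, neg_neg] at this
  rw [← intervalIntegral.integral_Iic_add_Ioi (b := t) h.int1.integrableOn h.int1.integrableOn]
  linarith

noncomputable def obj (φ : ℝ → ℝ) (t : ℝ) : ℝ :=
  AA φ t ^ 2 / FF φ t + ((∫ x, x * φ x) - AA φ t) ^ 2 / (1 - FF φ t)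

lemma D2_eq (h : Good φ) (t : ℝ) : DD (fun x => φ (-x)) (-t) =
    ((∫ x, x * φ x) - AA φ t) / (1 - FF φ t) - t := by
  unfold DD
  rw [h.F_refl, h.A_refl]; ring

lemma hobj (h : Good φ) (t : ℝ) : HasDerivAt (obj φ)
    (φ t * (DD φ t + DD (fun x => φ (-x)) (-t)) * (DD (fun x => φ (-x)) (-t) - DD φ t)) t := by
  have h1 := (h.F_pos t).ne'
  have h2 : 1 - FF φ t ≠ 0 := by linarith [h.F_lt t]
  have := (((h.hA t).pow 2).div (h.hF t) h1).add
    ((((h.hA t).const_sub (∫ x, x * φ x)).pow 2).div ((h.hF t).const_sub 1) h2)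
  refine this.congr_deriv ?_
  rw [h.D2_eq]; unfold DD
  simp only [Pi.pow_apply]
  field_simp
  ring

lemma main (h : Good φ) : ∃ T, ∀ s, s ≠ T → obj φ s < obj φ T := by
  have h' := h.refl
  set ψ : ℝ → ℝ := fun x => φ (-x) with hψ
  set k : ℝ → ℝ := fun t => DD ψ (-t) - DD φ t with hk
  have hanti : StrictAnti k := by
    intro a b hab
    have m1 := h.D_mono hab.le
    have m2 := h'.D_mono (neg_le_neg hab.le)
    rcases eq_or_lt_of_le m1 with e1 | l1
    · rcases eq_or_lt_of_le m2 with e2 | l2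
      · exfalso
        have c1 := h.const e1 (p := a + (b-a)/3) (q := a + 2*(b-a)/3)
          (by linarith) (by linarith) (by linarith)
        have c2 := h'.const e2 (p := -(a + 2*(b-a)/3)) (q := -(a + (b-a)/3))
          (by linarith) (by linarith) (by linarith)
        simp only [hψ, neg_neg] at c2
        exact lt_asymm c1 c2
      · simp only [hk]; linarith
    · simp only [hk]; linarith
  have hc : Continuous k := by
    have c1 : Continuous (DD φ) := continuous_iff_continuousAt.2 fun x => (h.hD x).continuousAt
    have c2 : Continuous (DD ψ) := continuous_iff_continuousAt.2 fun x => (h'.hD x).continuousAt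
    exact (c2.comp continuous_neg).sub c1
  obtain ⟨T, hT⟩ : ∃ T, k T = 0 := by
    have hp : ∃ a, 0 ≤ k a := by
      refine ⟨min 0 (-((∫ x, x * ψ x) + DD φ 0)), ?_⟩
      set a := min 0 (-((∫ x, x * ψ x) + DD φ 0))
      have h1 : a ≤ 0 := min_le_left _ _
      have h2 : a ≤ (-((∫ x, x * ψ x) + DD φ 0)) := min_le_right _ _
      have := h.D_mono h1
      have := h'.D_ge (-a)
      simp only [hk]; linarith
    have hn : ∃ a, k a ≤ 0 := by
      refine ⟨max 0 (((∫ x, x * φ x) + DD ψ 0)), ?_⟩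
      set a := max 0 (((∫ x, x * φ x) + DD ψ 0))
      have h1 : 0 ≤ a := le_max_left _ _
      have h2 : (((∫ x, x * φ x) + DD ψ 0)) ≤ a := le_max_right _ _
      have := h'.D_mono (show -a ≤ 0 by linarith)
      have := h.D_ge a
      simp only [hk]; linarith
    obtain ⟨a, ha⟩ := hn
    obtain ⟨b, hb⟩ := hp
    exact mem_range_of_exists_le_of_exists_ge hc ⟨a, ha⟩ ⟨b, hb⟩
  have hd : ∀ t, HasDerivAt (obj φ) (φ t * (DD φ t + DD ψ (-t)) * k t) t := h.hobj
  have hpp : ∀ t, 0 < φ t * (DD φ t + DD ψ (-t)) := fun t =>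
    mul_pos (h.pos t) (add_pos (h.D_pos t) (h'.D_pos (-t)))
  refine ⟨T, fun s hs => ?_⟩
  rcases lt_or_gt_of_ne hs with hs | hs
  · have : StrictMonoOn (obj φ) (Iic T) := by
      apply strictMonoOn_of_deriv_pos (convex_Iic T)
      · exact fun x _ => (hd x).continuousAt.continuousWithinAt
      · intro x hx
        rw [interior_Iic] at hx
        rw [(hd x).deriv]
        exact mul_pos (hpp x) (hT ▸ hanti hx)
    exact this (show s ∈ Iic T from hs.le) (show T ∈ Iic T from le_refl T) hs
  · have : StrictAntiOn (obj φ) (Ici T) := by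
      apply strictAntiOn_of_deriv_neg (convex_Ici T)
      · exact fun x _ => (hd x).continuousAt.continuousWithinAt
      · intro x hx
        rw [interior_Ici] at hx
        rw [(hd x).deriv]
        exact mul_neg_of_pos_of_neg (hpp x) (hT ▸ hanti hx)
    exact this (show T ∈ Ici T from le_refl T) (show s ∈ Ici T from hs.le) hs

end Good

lemma convex_lc {V : ℝ → ℝ} (hV : ConvexOn ℝ Set.univ V) (z x t : ℝ) (hz : z ≤ x) (hx : x ≤ t) :
    V x + V (z + (t - x)) ≤ V z + V t := by
  rcases eq_or_lt_of_le (hz.trans hx) with e | l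
  · have : x = z := by linarith
    subst this; subst e; simp
  · have hl : 0 < t - z := by linarith
    have h1 := hV.2 (mem_univ z) (mem_univ t) 
      (show 0 ≤ (t - x)/(t-z) from div_nonneg (by linarith) hl.le)
      (show 0 ≤ (x-z)/(t-z) from div_nonneg (by linarith) hl.le) (by field_simp; ring)
    have h2 := hV.2 (mem_univ z) (mem_univ t) 
      (show 0 ≤ (x - z)/(t-z) from div_nonneg (by linarith) hl.le)
      (show 0 ≤ (t-x)/(t-z) from div_nonneg (by linarith) hl.le) (by field_simp; ring)
    simp only [smul_eq_mul] at h1 h2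
    have e1 : (t - x)/(t-z) * z + (x-z)/(t-z) * t = x := by field_simp; ring
    have e2 : (x - z)/(t-z) * z + (t-x)/(t-z) * t = z + (t - x) := by field_simp; ring
    rw [e1] at h1; rw [e2] at h2
    have e3 : (t - x)/(t-z) + (x - z)/(t-z) = 1 := by field_simp; ring
    have : (t - x)/(t-z) * V z + (x-z)/(t-z) * V t + ((x - z)/(t-z) * V z + (t-x)/(t-z) * V t)
      = ((t - x)/(t-z) + (x - z)/(t-z)) * (V z + V t) := by ring
    rw [e3] at this
    linarith

lemma transfer {Ω : Type*} [MeasurableSpace Ω]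
    (P : Measure Ω) (X : Ω → ℝ) (hX : Measurable X) {φ : ℝ → ℝ} (hc : Continuous φ)
    (hpos : ∀ x, 0 < φ x)
    (hdens : Measure.map X P = volume.withDensity (fun x => ENNReal.ofReal (φ x)))
    {g : ℝ → ℝ} (hg : Continuous g) {s : Set ℝ} (hs : MeasurableSet s) :
    ∫ ω in X ⁻¹' s, g (X ω) ∂P = ∫ x in s, g x * φ x := by
  rw [← setIntegral_map hs hg.aestronglyMeasurable hX.aemeasurable, hdens,
    setIntegral_withDensity_eq_setIntegral_toReal_smul
      (hc.measurable.ennreal_ofReal) (by simp) g hs]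
  congr 1; funext x
  rw [ENNReal.toReal_ofReal (hpos x).le, smul_eq_mul, mul_comm]

lemma transfer_int {Ω : Type*} [MeasurableSpace Ω]
    (P : Measure Ω) (X : Ω → ℝ) (hX : Measurable X) {φ : ℝ → ℝ} (hc : Continuous φ)
    (hpos : ∀ x, 0 < φ x)
    (hdens : Measure.map X P = volume.withDensity (fun x => ENNReal.ofReal (φ x)))
    {g : ℝ → ℝ} (hg : Continuous g) (hi : Integrable (fun ω => g (X ω)) P) :
    Integrable (fun x => g x * φ x) := by
  have h1 : Integrable g (Measure.map X P) :=
    (integrable_map_measure hg.aestronglyMeasurable hX.aemeasurable).2 hi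
  rw [hdens, integrable_withDensity_iff (hc.measurable.ennreal_ofReal) (by simp)] at h1
  refine h1.congr (Filter.Eventually.of_forall fun x => ?_)
  simp only [ENNReal.toReal_ofReal (hpos x).le]

/-- if `X` has a log-concave density `e^{-V}` (with `V : ℝ → ℝ` convex) and
`E[X²] < ∞`, then `f_X` has a unique maximizer on `{t : 0 < P(X ≤ t) < 1}`. -/
theorem unique_maximizer_of_logConcave {Ω : Type*} [MeasurableSpace Ω]
    (P : Measure Ω) [IsProbabilityMeasure P] (X : Ω → ℝ) (hX : Measurable X)
    (V : ℝ → ℝ) (hV : ConvexOn ℝ Set.univ V)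
    (hdens : Measure.map X P
      = volume.withDensity (fun x => ENNReal.ofReal (Real.exp (-V x))))
    (hX2 : Integrable (fun ω => (X ω) ^ 2) P) :
    ∃! t : ℝ, (0 < P {ω | X ω ≤ t} ∧ P {ω | X ω ≤ t} < 1) ∧
      ∀ s : ℝ, 0 < P {ω | X ω ≤ s} → P {ω | X ω ≤ s} < 1 →
        twoStepObjective P X s ≤ twoStepObjective P X t := by
  set φ : ℝ → ℝ := fun x => Real.exp (-V x) with hφ
  have hVc : Continuous V := by
    rw [← continuousOn_univ]
    exact hV.continuousOn isOpen_univ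
  have hc : Continuous φ := Real.continuous_exp.comp hVc.neg
  have hpos : ∀ x, 0 < φ x := fun x => Real.exp_pos _
  have hXi : Integrable X P := by
    have : MemLp X 2 P := (memLp_two_iff_integrable_sq hX.aestronglyMeasurable).2 hX2
    exact this.integrable (by norm_num)
  have hprob : ∀ s : Set ℝ, MeasurableSet s → (P (X ⁻¹' s)).toReal = ∫ x in s, φ x := by
    intro s hs
    have := transfer P X hX hc hpos hdens (g := fun _ => 1) continuous_const hs
    simpa [Measure.real] using this
  have hexp : ∀ s : Set ℝ, MeasurableSet s → ∫ ω in X ⁻¹' s, X ω ∂P = ∫ x in s, x * φ x :=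
    fun s hs => transfer P X hX hc hpos hdens (g := fun x => x) continuous_id hs
  have hG : Good φ :=
    { cont := hc
      pos := hpos
      int := by
        have := transfer_int P X hX hc hpos hdens (g := fun _ => 1) continuous_const
          (integrable_const _)
        simpa using this
      int1 := transfer_int P X hX hc hpos hdens (g := fun x => x) continuous_id hXi
      one := by
        have := hprob univ MeasurableSet.univ
        simpa using this.symm
      lc := by
        intro z x t hz hx
        simp only [hφ]
        rw [← Real.exp_add, ← Real.exp_add]
        apply Real.exp_le_exp.2
        linarith [convex_lc hV z x t hz hx] }
  have hFt : ∀ t, (P {ω | X ω ≤ t}).toReal = FF φ t := fun t => hprob (Iic t) measurableSet_Iic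
  have hobj : ∀ t, twoStepObjective P X t = Good.obj φ t := by
    intro t
    have h1 := intervalIntegral.integral_Iic_add_Ioi (b := t) hG.int.integrableOn
      hG.int.integrableOn
    have h2 := intervalIntegral.integral_Iic_add_Ioi (b := t) hG.int1.integrableOn
      hG.int1.integrableOn
    have e1 : ∫ ω in {ω | X ω ≤ t}, X ω ∂P = AA φ t := hexp (Iic t) measurableSet_Iic
    have e2 : ∫ ω in {ω | t < X ω}, X ω ∂P = (∫ x, x * φ x) - AA φ t := by
      rw [← h2]; unfold AA
      rw [add_sub_cancel_left]
      exact hexp (Ioi t) measurableSet_Ioi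
    have e3 : (P {ω | t < X ω}).toReal = 1 - FF φ t := by
      rw [← hG.one, ← h1]; unfold FF
      rw [add_sub_cancel_left]
      exact hprob (Ioi t) measurableSet_Ioi
    unfold twoStepObjective Good.obj
    rw [e1, e2, e3, hFt]
  have hpos' : ∀ t, 0 < P {ω | X ω ≤ t} := by
    intro t
    have := hG.F_pos t
    rw [← hFt] at this
    exact (ENNReal.toReal_pos_iff.1 this).1
  have hlt : ∀ t, P {ω | X ω ≤ t} < 1 := by
    intro t
    have := hG.F_lt t
    rw [← hFt] at this
    rw [← ENNReal.toReal_lt_toReal (measure_ne_top _ _) ENNReal.one_ne_top]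
    simpa using this
  obtain ⟨T, hT⟩ := hG.main
  refine ⟨T, ⟨⟨hpos' T, hlt T⟩, fun s _ _ => ?_⟩, ?_⟩
  · rw [hobj, hobj]
    rcases eq_or_ne s T with e | e
    · rw [e]
    · exact (hT s e).le
  · rintro y ⟨-, hy⟩
    by_contra e
    have h1 := hy T (hpos' T) (hlt T)
    rw [hobj, hobj] at h1
    exact absurd (hT y e) (not_lt.2 h1)
end

section
/- Let X be a real random variable with a density of the form φ(x) = e^{-V(x)} on ℝ with V : ℝ → ℝ continuous, E[X²] < ∞, and mean μ = E[X]. If μ is a local maximum of the function f_X(t) = E[X·1_{X≤t}]²/P(X ≤ t) + E[X·1_{X>t}]²/P(X > t), then μ is a median of X, i.e. P(X ≤ μ) = 1/2; in other words X is weakly symmetric. -/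
open MeasureTheory Real Set

lemma aux_deriv (g : ℝ → ℝ) (hg : Continuous g) (hi : Integrable g) (m : ℝ) :
    HasDerivAt (fun t => ∫ x in Iic t, g x) (g m) m := by
  have h1 : (fun t => ∫ x in Iic t, g x) = fun t => (∫ x in Iic m, g x) + ∫ x in m..t, g x := by
    funext t
    rw [← intervalIntegral.integral_Iic_sub_Iic hi.integrableOn hi.integrableOn]
    ring
  rw [h1]
  exact (intervalIntegral.integral_hasDerivAt_right (hg.intervalIntegrable _ _)
    hg.stronglyMeasurable.stronglyMeasurableAtFilter hg.continuousAt).const_add _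

/-- if `X` has density `e^{-V}` with `V` continuous, `E[X²] < ∞`, and the mean
`μ = E[X]` is a local maximum of `f_X`, then `μ` is a median of `X`, i.e. `P(X ≤ μ) = 1/2`. -/
theorem weaklySymmetric_of_mean_isLocalMax {Ω : Type*} [MeasurableSpace Ω]
    (P : Measure Ω) [IsProbabilityMeasure P] (X : Ω → ℝ) (hX : Measurable X)
    (V : ℝ → ℝ) (hV : Continuous V)
    (hdens : Measure.map X P
      = volume.withDensity (fun x => ENNReal.ofReal (Real.exp (-V x))))
    (hX2 : Integrable (fun ω => (X ω) ^ 2) P)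
    (μ : ℝ) (hμ : μ = ∫ ω, X ω ∂P)
    (hmax : IsLocalMax (twoStepObjective P X) μ) :
    P {ω | X ω ≤ μ} = 1 / 2 := by
  have hφc : Continuous (fun x => Real.exp (-V x)) := by fun_prop
  have hXi : Integrable X P :=
    ((memLp_two_iff_integrable_sq hX.aestronglyMeasurable).2 hX2).integrable (by norm_num)
  have hmeas : Measurable (fun x => ENNReal.ofReal (Real.exp (-V x))) :=
    hφc.measurable.ennreal_ofReal
  have hlt : ∀ᵐ x ∂(volume : Measure ℝ), ENNReal.ofReal (Real.exp (-V x)) < ⊤ :=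
    Filter.Eventually.of_forall fun x => ENNReal.ofReal_lt_top
  have hint : ∀ g : ℝ → ℝ, Continuous g → Integrable (fun ω => g (X ω)) P →
      Integrable (fun x => g x * Real.exp (-V x)) := by
    intro g hg h
    have h2 : Integrable g (Measure.map X P) :=
      (integrable_map_measure hg.aestronglyMeasurable hX.aemeasurable).2 h
    rw [hdens, integrable_withDensity_iff hmeas hlt] at h2
    simpa [ENNReal.toReal_ofReal (Real.exp_pos _).le] using h2
  have hset : ∀ g : ℝ → ℝ, Continuous g → ∀ s : Set ℝ, MeasurableSet s →
      ∫ ω in X ⁻¹' s, g (X ω) ∂P = ∫ x in s, g x * Real.exp (-V x) := by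
    intro g hg s hs
    rw [← setIntegral_map hs hg.aestronglyMeasurable hX.aemeasurable, hdens,
      setIntegral_withDensity_eq_setIntegral_toReal_smul hmeas
        (Filter.Eventually.of_forall fun x => ENNReal.ofReal_lt_top) _ hs]
    refine integral_congr_ae (Filter.Eventually.of_forall fun x => ?_)
    simp [ENNReal.toReal_ofReal (Real.exp_pos _).le, mul_comm]
  have iφ : Integrable (fun x => Real.exp (-V x)) := by
    simpa using hint (fun _ => 1) continuous_const (integrable_const _)
  have iψ : Integrable (fun x => x * Real.exp (-V x)) := hint (fun x => x) continuous_id hXi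
  set F : ℝ → ℝ := fun t => ∫ x in Iic t, Real.exp (-V x) with hF
  set G : ℝ → ℝ := fun t => ∫ x in Iic t, x * Real.exp (-V x) with hG
  have hPF : ∀ t, (P {ω | X ω ≤ t}).toReal = F t := by
    intro t
    have := hset (fun _ => 1) continuous_const (Iic t) measurableSet_Iic
    simp [Measure.real] at this
    exact this
  have hPG : ∀ t, ∫ ω in {ω | X ω ≤ t}, X ω ∂P = G t := fun t =>
    hset (fun x => x) continuous_id (Iic t) measurableSet_Iic
  have hc : ∀ t, {ω | t < X ω} = {ω | X ω ≤ t}ᶜ := by intro t; ext; simp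
  have hm : ∀ t, MeasurableSet {ω | X ω ≤ t} := fun t => hX measurableSet_Iic
  have hPF' : ∀ t, (P {ω | t < X ω}).toReal = 1 - F t := by
    intro t
    rw [hc, ← hPF]
    exact probReal_compl_eq_one_sub (hm t)
  have hPG' : ∀ t, ∫ ω in {ω | t < X ω}, X ω ∂P = μ - G t := by
    intro t
    rw [hc, ← hPG, hμ, ← integral_add_compl (hm t) hXi]; ring
  have hf : twoStepObjective P X = fun t => G t ^ 2 / F t + (μ - G t) ^ 2 / (1 - F t) := by
    funext t
    simp only [twoStepObjective, hPF, hPG, hPF', hPG']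
  have hF0 : 0 < F μ := by
    rw [hF]
    refine (setIntegral_pos_iff_support_of_nonneg_ae
      (Filter.Eventually.of_forall fun x => (Real.exp_pos _).le) iφ.integrableOn).2 ?_
    have : Function.support (fun x => Real.exp (-V x)) = univ := by
      ext x; simp [Real.exp_ne_zero]
    rw [this]; simp
  have hF1 : 0 < 1 - F μ := by
    have h := hset (fun _ => 1) continuous_const (Ioi μ) measurableSet_Ioi
    have h' : (P {ω | μ < X ω}).toReal = ∫ x in Ioi μ, Real.exp (-V x) := by
      simp [Measure.real] at h
      exact h
    rw [← hPF', h']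
    refine (setIntegral_pos_iff_support_of_nonneg_ae
      (Filter.Eventually.of_forall fun x => (Real.exp_pos _).le) iφ.integrableOn).2 ?_
    have : Function.support (fun x => Real.exp (-V x)) = univ := by
      ext x; simp [Real.exp_ne_zero]
    rw [this]; simp
  have hGF : 0 < μ * F μ - G μ := by
    have e : μ * F μ - G μ = ∫ x in Iic μ, (μ - x) * Real.exp (-V x) := by
      simp only [hF, hG]
      rw [← integral_const_mul, ← integral_sub (iφ.const_mul μ).integrableOn iψ.integrableOn]
      congr 1; funext x; ring
    rw [e]
    refine (setIntegral_pos_iff_support_of_nonneg_ae ?_ ?_).2 ?_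
    · filter_upwards [ae_restrict_mem measurableSet_Iic] with x hx
      exact mul_nonneg (sub_nonneg.2 hx) (Real.exp_pos _).le
    · have : Integrable (fun x => (μ - x) * Real.exp (-V x)) := by
        convert (iφ.const_mul μ).sub iψ using 1
        funext x; simp; ring
      exact this.integrableOn
    · refine lt_of_lt_of_le ?_ (measure_mono (s := Iio μ) ?_)
      · simp
      · intro x hx
        have hx' : x < μ := hx
        exact ⟨(mul_pos (sub_pos.2 hx') (Real.exp_pos _)).ne', hx'.le⟩
  have dF := aux_deriv _ hφc iφ μ
  have dG := aux_deriv _ (continuous_id.mul hφc) iψ μ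
  change HasDerivAt F _ μ at dF
  change HasDerivAt G (μ * Real.exp (-V μ)) μ at dG
  have d := ((dG.pow 2).div dF hF0.ne').add
    (((dG.const_sub μ).pow 2).div (dF.const_sub 1) hF1.ne')
  rw [hf] at hmax
  have z := hmax.hasDerivAt_eq_zero d
  simp only [Pi.pow_apply] at z
  have hp := Real.exp_pos (-V μ)
  have half : F μ = 1 / 2 := by
    generalize F μ = p at *
    generalize G μ = q at *
    generalize Real.exp (-V μ) = r at *
    have hp0 := hF0.ne'
    have hp1 := hF1.ne'
    field_simp at z
    have key : (μ * p - q) ^ 2 * (2 * p - 1) = 0 := by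
      simp at z
      have hr := hp.ne'
      rcases z with z | z
      · exact absurd z hr
      · linear_combination z
    rcases mul_eq_zero.1 key with h | h
    · exact absurd h (pow_pos hGF 2).ne'
    · linarith
  rw [← hPF μ] at half
  rw [← ENNReal.ofReal_toReal (measure_ne_top P {ω | X ω ≤ μ}), half]
  rw [ENNReal.ofReal_div_of_pos (by norm_num)]; simp
end

section
/- Let X be a real random variable with a log-concave density φ(x) = e^{-V(x)} (V : ℝ → ℝ convex), E[X²] < ∞, mean μ, and assume X is weakly symmetric, i.e. P(X ≤ μ) = 1/2. Then the function f_X(t) = E[X·1_{X≤t}]²/P(X ≤ t) + E[X·1_{X>t}]²/P(X > t) is nonincreasing on [μ, ∞) and nondecreasing on (−∞, μ], and f_X(t) < f_X(μ) for every t ≠ μ; in particular t = μ is the unique maximizer of f_X. -/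
open MeasureTheory Real Set

open Filter Topology in
lemma tail_hasDerivAt (q : ℝ → ℝ) (hc : Continuous q) (hi : Integrable q) (t : ℝ) :
    HasDerivAt (fun t => ∫ x in Ioi t, q x) (-q t) t := by
  have h : (fun t => ∫ x in Ioi t, q x) = fun t => (∫ x in Ioi (0:ℝ), q x) - ∫ x in (0:ℝ)..t, q x := by
    funext s
    rw [← intervalIntegral.integral_Ioi_sub_Ioi' (hi.integrableOn) (hi.integrableOn)]
    ring
  rw [h]
  have := (intervalIntegral.integral_hasDerivAt_right (hi.intervalIntegrable (a := 0) (b := t))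
    (hc.stronglyMeasurableAtFilter _ _) hc.continuousAt)
  simpa using this.const_sub (∫ x in Ioi (0:ℝ), q x)

open Filter Topology in
lemma tail_tendsto (q : ℝ → ℝ) (hi : Integrable q) :
    Tendsto (fun t => ∫ x in Ioi t, q x) atTop (𝓝 0) := by
  have := tendsto_setIntegral_of_antitone (μ := volume) (f := q) (s := fun t : ℝ => Ioi t)
    (fun i => measurableSet_Ioi) (fun a b h => Ioi_subset_Ioi h) ⟨0, hi.integrableOn⟩
  have h2 : (⋂ n : ℝ, Ioi n) = ∅ := by
    ext x; simp only [mem_iInter, mem_Ioi, mem_empty_iff_false, iff_false, not_forall]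
    exact ⟨x, lt_irrefl x⟩
  simpa [h2] using this

lemma convex_swap (V : ℝ → ℝ) (hV : ConvexOn ℝ Set.univ V) (t x y : ℝ) (hx : t ≤ x) (hy : t ≤ y) :
    V x + V y ≤ V t + V (y + (x - t)) := by
  rcases eq_or_lt_of_le hx with rfl | hx
  · simp
  have hd : 0 < (x - t) + (y - t) := by linarith
  have e : (y - t) / ((x - t) + (y - t)) + (x - t) / ((x - t) + (y - t)) = 1 := by
    field_simp; ring
  have n1 : 0 ≤ (y - t) / ((x - t) + (y - t)) := div_nonneg (by linarith) hd.le
  have n2 : 0 ≤ (x - t) / ((x - t) + (y - t)) := div_nonneg (by linarith) hd.le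
  have h1 := hV.2 (mem_univ t) (mem_univ (y + (x - t))) n1 n2 e
  have h2 := hV.2 (mem_univ t) (mem_univ (y + (x - t))) n2 n1 (by rw [add_comm]; exact e)
  set a := (y - t) / ((x - t) + (y - t)) with ha
  set b := (x - t) / ((x - t) + (y - t)) with hb
  have hbd : b * ((x - t) + (y - t)) = x - t := by rw [hb]; field_simp
  simp only [smul_eq_mul] at h1 h2
  have e1 : a * t + b * (y + (x - t)) = x := by
    have : a = 1 - b := by linarith
    rw [this]; linear_combination hbd
  have e2 : b * t + a * (y + (x - t)) = y := by
    have : a = 1 - b := by linarith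
    rw [this]; linear_combination -hbd
  rw [e1] at h1
  rw [e2] at h2
  have : a = 1 - b := by linarith
  rw [this] at h1 h2
  linarith

lemma hazard (V : ℝ → ℝ) (hV : ConvexOn ℝ Set.univ V)
    (hi : Integrable (fun x => Real.exp (-V x))) (t x : ℝ) (hx : t ≤ x) :
    Real.exp (-V t) * ∫ y in Ioi x, Real.exp (-V y)
      ≤ Real.exp (-V x) * ∫ y in Ioi t, Real.exp (-V y) := by
  have h1 : ∫ y in Ioi x, Real.exp (-V y) = ∫ y in Ioi t, Real.exp (-V (y + (x - t))) := by
    have := (measurePreserving_add_right volume (x - t)).setIntegral_preimage_emb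
      (measurableEmbedding_addRight (x - t)) (fun y => Real.exp (-V y)) (Ioi x)
    rw [← this]
    congr 2
    simp
  rw [h1, ← integral_const_mul, ← integral_const_mul]
  have hi2 : Integrable (fun y => Real.exp (-V (y + (x - t)))) := hi.comp_add_right (x - t)
  refine setIntegral_mono_on (hi2.const_mul _).integrableOn (hi.const_mul _).integrableOn
    measurableSet_Ioi fun y hy => ?_
  rw [← Real.exp_add, ← Real.exp_add]
  have := convex_swap V hV t x y hx (le_of_lt hy)
  apply Real.exp_le_exp.2
  linarith

lemma core (V : ℝ → ℝ) (hV : ConvexOn ℝ Set.univ V)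
    (hi : Integrable (fun x => Real.exp (-V x))) (μ : ℝ)
    (hi1 : Integrable (fun x => (x - μ) * Real.exp (-V x)))
    (hm : ∫ x in Ioi μ, Real.exp (-V x) = 1 / 2) :
    StrictAntiOn (fun t => (∫ x in Ioi t, (x - μ) * Real.exp (-V x)) ^ 2 /
      ((∫ x in Ioi t, Real.exp (-V x)) * (1 - ∫ x in Ioi t, Real.exp (-V x)))) (Ici μ) := by
  have hVc : Continuous V := continuousOn_univ.1 (hV.continuousOn isOpen_univ)
  have hφc : Continuous (fun x => Real.exp (-V x)) := by fun_prop
  have hφ1c : Continuous (fun x => (x - μ) * Real.exp (-V x)) := by fun_prop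
  have hSd := tail_hasDerivAt _ hφc hi
  have hGd := tail_hasDerivAt _ hφ1c hi1
  have hSt := tail_tendsto _ hi
  have hGt := tail_tendsto _ hi1
  have hSpos : ∀ t, 0 < ∫ x in Ioi t, Real.exp (-V x) := by
    intro t
    rw [setIntegral_pos_iff_support_of_nonneg_ae]
    · have : Function.support (fun x => Real.exp (-V x)) = univ := by
        ext x; simp [(Real.exp_pos _).ne']
      rw [this]; simp
    · exact Filter.Eventually.of_forall fun x => (Real.exp_pos _).le
    · exact hi.integrableOn
  have hRnn : ∀ t, 0 ≤ (∫ x in Ioi t, (x - μ) * Real.exp (-V x))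
      - (t - μ) * ∫ x in Ioi t, Real.exp (-V x) := by
    intro t
    rw [← integral_const_mul, ← integral_sub hi1.integrableOn (hi.const_mul _).integrableOn]
    refine setIntegral_nonneg measurableSet_Ioi fun x hx => ?_
    have : t < x := hx
    have := Real.exp_pos (-V x)
    nlinarith
  have hhaz := hazard V hV hi
  have hφpos : ∀ t, 0 < Real.exp (-V t) := fun t => Real.exp_pos _
  set S : ℝ → ℝ := fun t => ∫ x in Ioi t, Real.exp (-V x) with hS
  set G : ℝ → ℝ := fun t => ∫ x in Ioi t, (x - μ) * Real.exp (-V x) with hG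
  set φ : ℝ → ℝ := fun t => Real.exp (-V t) with hφ
  change ∀ t, HasDerivAt S (-φ t) t at hSd
  change ∀ t, HasDerivAt G (-((t - μ) * φ t)) t at hGd
  change ∀ t, 0 < S t at hSpos
  change ∀ t, 0 < φ t at hφpos
  change ∀ t, 0 ≤ G t - (t - μ) * S t at hRnn
  change ∀ t x, t ≤ x → φ t * S x ≤ φ x * S t at hhaz
  change S μ = 1 / 2 at hm
  change StrictAntiOn (fun t => G t ^ 2 / (S t * (1 - S t))) (Ici μ)
  clear_value S G φ
  have hSanti : StrictAnti S := strictAnti_of_deriv_neg fun t => by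
    rw [(hSd t).deriv]; linarith [hφpos t]
  have hRd : ∀ t, HasDerivAt (fun t => G t - (t - μ) * S t) (-S t) t := by
    intro t
    have := (hGd t).sub (((hasDerivAt_id t).sub_const μ).mul (hSd t))
    refine this.congr_deriv ?_
    simp
  have hRt : Filter.Tendsto (fun t => G t - (t - μ) * S t) Filter.atTop (nhds 0) := by
    refine squeeze_zero' (Filter.Eventually.of_forall hRnn) ?_ hGt
    filter_upwards [Filter.eventually_ge_atTop μ] with t ht
    have := mul_nonneg (sub_nonneg.2 ht) (hSpos t).le
    linarith
  -- mean residual life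
  have hmrl : ∀ t, φ t * (G t - (t - μ) * S t) ≤ S t ^ 2 := by
    intro t
    have hDd : ∀ x, HasDerivAt (fun x => S t * S x - φ t * (G x - (x - μ) * S x))
        (S t * (-φ x) - φ t * (-S x)) x := fun x =>
      ((hSd x).const_mul (S t)).sub ((hRd x).const_mul (φ t))
    have hanti : AntitoneOn (fun x => S t * S x - φ t * (G x - (x - μ) * S x)) (Ici t) := by
      refine antitoneOn_of_deriv_nonpos (convex_Ici t)
        (fun x _ => (hDd x).continuousAt.continuousWithinAt)
        (fun x _ => (hDd x).differentiableAt.differentiableWithinAt) fun x hx => ?_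
      rw [(hDd x).deriv]
      rw [interior_Ici] at hx
      have := hhaz t x (le_of_lt hx)
      linarith
    have hlim : Filter.Tendsto (fun x => S t * S x - φ t * (G x - (x - μ) * S x))
        Filter.atTop (nhds 0) := by
      simpa using (hSt.const_mul (S t)).sub (hRt.const_mul (φ t))
    have : 0 ≤ S t * S t - φ t * (G t - (t - μ) * S t) := by
      refine le_of_tendsto hlim ?_
      filter_upwards [Filter.eventually_ge_atTop t] with x hx
      exact hanti self_mem_Ici hx hx
    nlinarith
  have hSlt : ∀ t, μ < t → S t < 1 / 2 := fun t ht => hm ▸ hSanti ht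
  have hSle : ∀ t, μ ≤ t → S t ≤ 1 / 2 := fun t ht => hm ▸ hSanti.antitone ht
  -- H
  have hHd : ∀ t, HasDerivAt (fun t => (t - μ) - (G t - (t - μ) * S t) / S t * (1 - 2 * S t))
      (2 - 2 * S t - φ t * (G t - (t - μ) * S t) / S t ^ 2) t := by
    intro t
    have hne := (hSpos t).ne'
    have := ((hasDerivAt_id t).sub_const μ).sub
      (((hRd t).div (hSd t) hne).mul (((hSd t).const_mul 2).const_sub 1))
    refine this.congr_deriv ?_
    simp only [Pi.div_apply]
    field_simp
    ring
  have hHmono : StrictMonoOn (fun t => (t - μ) - (G t - (t - μ) * S t) / S t * (1 - 2 * S t))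
      (Ici μ) := by
    refine strictMonoOn_of_deriv_pos (convex_Ici μ)
      (fun x _ => (hHd x).continuousAt.continuousWithinAt) fun x hx => ?_
    rw [(hHd x).deriv]
    rw [interior_Ici] at hx
    have h1 := hSlt x hx
    have h2 : φ x * (G x - (x - μ) * S x) / S x ^ 2 ≤ 1 :=
      (div_le_one (pow_pos (hSpos x) 2)).2 (hmrl x)
    linarith
  have hK : ∀ t, μ < t → 0 < 2 * (t - μ) * (S t * (1 - S t)) - G t * (1 - 2 * S t) := by
    intro t ht
    have := hHmono self_mem_Ici (mem_Ici.2 ht.le) ht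
    simp only [hm, sub_self] at this
    have h2 : 0 < (t - μ) - (G t - (t - μ) * S t) / S t * (1 - 2 * S t) := by
      norm_num at this ⊢; exact this
    have h3 := mul_pos h2 (hSpos t)
    have hne := (hSpos t).ne'
    have h4 : ((t - μ) - (G t - (t - μ) * S t) / S t * (1 - 2 * S t)) * S t
        = 2 * (t - μ) * (S t * (1 - S t)) - G t * (1 - 2 * S t) := by
      field_simp
      ring
    linarith
  have hne : ∀ t, μ ≤ t → S t * (1 - S t) ≠ 0 := fun t ht =>
    (mul_pos (hSpos t) (by linarith [hSle t ht])).ne'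
  have hgd : ∀ t, μ ≤ t → HasDerivAt (fun t => G t ^ 2 / (S t * (1 - S t)))
      (-(G t * φ t * (2 * (t - μ) * (S t * (1 - S t)) - G t * (1 - 2 * S t)))
        / (S t * (1 - S t)) ^ 2) t := by
    intro t ht
    have := ((hGd t).pow 2).div ((hSd t).mul ((hSd t).const_sub 1)) (hne t ht)
    refine this.congr_deriv ?_
    simp only [Pi.mul_apply, Pi.pow_apply]
    congr 1
    push_cast
    ring
  refine strictAntiOn_of_deriv_neg (convex_Ici μ)
      (fun x hx => (hgd x hx).continuousAt.continuousWithinAt) fun x hx => ?_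
  rw [interior_Ici] at hx
  have hx' : μ < x := hx
  rw [(hgd x hx'.le).deriv]
  have hGpos : 0 < G x := by
    have := hRnn x
    have := mul_pos (sub_pos.2 hx') (hSpos x)
    linarith
  refine div_neg_of_neg_of_pos (neg_neg_of_pos ?_) (pow_pos (mul_pos (hSpos x) (by linarith [hSlt x hx'])) 2)
  exact mul_pos (mul_pos hGpos (hφpos x)) (hK x hx')

/-- if `X` has a log-concave density `e^{-V}` (`V` convex), `E[X²] < ∞`,
mean `μ`, and is weakly symmetric (`P(X ≤ μ) = 1/2`), then `f_X` is nonincreasing on `[μ, ∞)`,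
nondecreasing on `(−∞, μ]`, and `f_X(t) < f_X(μ)` for every `t ≠ μ`; in particular `μ` is the
unique maximizer of `f_X`. -/
theorem mean_is_unique_maximizer_of_weaklySymmetric_logConcave {Ω : Type*} [MeasurableSpace Ω]
    (P : Measure Ω) [IsProbabilityMeasure P] (X : Ω → ℝ) (hX : Measurable X)
    (V : ℝ → ℝ) (hV : ConvexOn ℝ Set.univ V)
    (hdens : Measure.map X P
      = volume.withDensity (fun x => ENNReal.ofReal (Real.exp (-V x))))
    (hX2 : Integrable (fun ω => (X ω) ^ 2) P)
    (μ : ℝ) (hμ : μ = ∫ ω, X ω ∂P)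
    (hsym : P {ω | X ω ≤ μ} = 1 / 2) :
    AntitoneOn (twoStepObjective P X) (Set.Ici μ)
      ∧ MonotoneOn (twoStepObjective P X) (Set.Iic μ)
      ∧ ∀ t : ℝ, t ≠ μ → twoStepObjective P X t < twoStepObjective P X μ := by
  have hVc : Continuous V := continuousOn_univ.1 (hV.continuousOn isOpen_univ)
  have hφm : Measurable (fun x => ENNReal.ofReal (Real.exp (-V x))) := by fun_prop
  have htr : ∀ (u : ℝ → ℝ), Continuous u → ∀ s, MeasurableSet s →
      ∫ ω in X ⁻¹' s, u (X ω) ∂P = ∫ x in s, Real.exp (-V x) * u x := by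
    intro u hu s hs
    rw [← setIntegral_map hs hu.aestronglyMeasurable hX.aemeasurable, hdens,
      setIntegral_withDensity_eq_setIntegral_toReal_smul hφm (by simp) _ hs]
    simp [ENNReal.toReal_ofReal (Real.exp_pos _).le]
  have hint : ∀ (u : ℝ → ℝ), Continuous u → Integrable (fun ω => u (X ω)) P →
      Integrable (fun x => Real.exp (-V x) * u x) := by
    intro u hu h
    have h1 : Integrable u (Measure.map X P) :=
      (integrable_map_measure hu.aestronglyMeasurable hX.aemeasurable).2 h
    rw [hdens, integrable_withDensity_iff_integrable_smul' hφm (by simp)] at h1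
    simpa [ENNReal.toReal_ofReal (Real.exp_pos _).le] using h1
  have hXi : Integrable X P :=
    ((memLp_two_iff_integrable_sq hX.aestronglyMeasurable).2 hX2).integrable (by norm_num)
  have hi : Integrable (fun x => Real.exp (-V x)) := by
    simpa using hint (fun _ => 1) continuous_const (integrable_const _)
  have hi1 : Integrable (fun x => (x - μ) * Real.exp (-V x)) := by
    simpa [mul_comm] using hint (fun x => x - μ) (by fun_prop) (hXi.sub (integrable_const μ))
  have hPr : ∀ s, MeasurableSet s → (P (X ⁻¹' s)).toReal = ∫ x in s, Real.exp (-V x) := by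
    intro s hs
    have := htr (fun _ => 1) continuous_const s hs
    simpa [Measure.real] using this
  have hXs : ∀ s, MeasurableSet s → ∫ ω in X ⁻¹' s, X ω ∂P
      = (∫ x in s, (x - μ) * Real.exp (-V x)) + μ * ∫ x in s, Real.exp (-V x) := by
    intro s hs
    rw [htr (fun x => x) continuous_id s hs, ← integral_const_mul,
      ← integral_add hi1.integrableOn (hi.const_mul _).integrableOn]
    congr 1
    funext x
    ring
  have htot : ∫ x, Real.exp (-V x) = 1 := by
    have := hPr univ MeasurableSet.univ
    simpa using this.symm
  have htot1 : ∫ x, (x - μ) * Real.exp (-V x) = 0 := by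
    have := hXs univ MeasurableSet.univ
    simp only [preimage_univ, Measure.restrict_univ, ← hμ, htot] at this
    linarith
  have hc0 : ∀ t, ∫ x in Iic t, Real.exp (-V x) = 1 - ∫ x in Ioi t, Real.exp (-V x) := by
    intro t
    have := intervalIntegral.integral_Iic_add_Ioi (b := t) hi.integrableOn hi.integrableOn
    linarith
  have hc1 : ∀ t, ∫ x in Iic t, (x - μ) * Real.exp (-V x)
      = - ∫ x in Ioi t, (x - μ) * Real.exp (-V x) := by
    intro t
    have := intervalIntegral.integral_Iic_add_Ioi (b := t) hi1.integrableOn hi1.integrableOn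
    linarith
  have hpos : ∀ s : Set ℝ, 0 < volume s → 0 < ∫ x in s, Real.exp (-V x) := by
    intro s hs
    rw [setIntegral_pos_iff_support_of_nonneg_ae]
    · have : Function.support (fun x => Real.exp (-V x)) = univ := by
        ext x; simp [(Real.exp_pos _).ne']
      rw [this]; simpa using hs
    · exact Filter.Eventually.of_forall fun x => (Real.exp_pos _).le
    · exact hi.integrableOn
  have hobj : ∀ t, twoStepObjective P X t = (∫ x in Ioi t, (x - μ) * Real.exp (-V x)) ^ 2 /
      ((∫ x in Ioi t, Real.exp (-V x)) * (1 - ∫ x in Ioi t, Real.exp (-V x))) + μ ^ 2 := by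
    intro t
    have e1 := hXs (Iic t) measurableSet_Iic
    have e2 := hXs (Ioi t) measurableSet_Ioi
    have e3 := hPr (Iic t) measurableSet_Iic
    have e4 := hPr (Ioi t) measurableSet_Ioi
    have p1 := (hpos (Ioi t) (by simp)).ne'
    have p2 := (hpos (Iic t) (by simp)).ne'
    rw [hc0] at p2
    rw [hc0, hc1] at e1
    rw [hc0] at e3
    change (∫ ω in X ⁻¹' Iic t, X ω ∂P) ^ 2 / (P (X ⁻¹' Iic t)).toReal
      + (∫ ω in X ⁻¹' Ioi t, X ω ∂P) ^ 2 / (P (X ⁻¹' Ioi t)).toReal = _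
    rw [e1, e2, e3, e4]
    field_simp
    ring
  have hhalf : ∫ x in Iic μ, Real.exp (-V x) = 1 / 2 := by
    rw [← hPr _ measurableSet_Iic]
    change (P {ω | X ω ≤ μ}).toReal = 1 / 2
    rw [hsym]; simp
  have hA : StrictAntiOn (twoStepObjective P X) (Ici μ) := by
    have h := core V hV hi μ hi1 (by have := hc0 μ; linarith)
    intro a ha b hb hab
    rw [hobj, hobj]
    have := h ha hb hab
    simpa using this
  have hB : StrictMonoOn (twoStepObjective P X) (Iic μ) := by
    have hVn : ConvexOn ℝ Set.univ (fun x => V (-x)) := by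
      have := hV.comp_linearMap (-LinearMap.id : ℝ →ₗ[ℝ] ℝ)
      simpa [Function.comp_def] using this
    have r0 : ∀ t, ∫ x in Ioi (-t), Real.exp (-V (-x)) = 1 - ∫ x in Ioi t, Real.exp (-V x) := by
      intro t
      rw [integral_comp_neg_Ioi (-t) (fun x => Real.exp (-V x)), neg_neg, hc0]
    have r1 : ∀ t, ∫ x in Ioi (-t), (x - -μ) * Real.exp (-V (-x))
        = ∫ x in Ioi t, (x - μ) * Real.exp (-V x) := by
      intro t
      rw [← neg_neg (∫ x in Ioi t, (x - μ) * Real.exp (-V x)), ← hc1, ← integral_neg]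
      have := integral_comp_neg_Ioi (-t) (fun x => -((x - μ) * Real.exp (-V x)))
      rw [neg_neg] at this
      rw [← this]
      congr 1
      funext x
      ring
    have h := core (fun x => V (-x)) hVn hi.comp_neg (-μ)
      (by
        have := hi1.comp_neg.neg
        refine this.congr (Filter.Eventually.of_forall fun x => ?_)
        simp only [Pi.neg_apply]
        ring)
      (by rw [r0, ← hc0, hhalf])
    intro a ha b hb hab
    rw [hobj, hobj]
    have := h (mem_Ici.2 (neg_le_neg (mem_Iic.1 hb))) (mem_Ici.2 (neg_le_neg (mem_Iic.1 ha))) (neg_lt_neg hab)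
    simp only [r0, r1, sub_sub_cancel] at this
    rw [mul_comm (∫ x in Ioi a, Real.exp (-V x)), mul_comm (∫ x in Ioi b, Real.exp (-V x))]
    linarith
  refine ⟨hA.antitoneOn, hB.monotoneOn, fun t ht => ?_⟩
  rcases lt_or_gt_of_ne ht with h | h
  · exact hB h.le self_mem_Iic h
  · exact hA self_mem_Ici h.le h
end

section
/- Let V : [0, ∞) → ℝ be convex with ∫₀^∞ e^{-V(y)} dy < ∞ and ∫₀^∞ y e^{-V(y)} dy < ∞. Then e^{-V(0)} · ∫₀^∞ y e^{-V(y)} dy ≤ (∫₀^∞ e^{-V(y)} dy)². -/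
open MeasureTheory Real Set

lemma aux_convex (V : ℝ → ℝ) (hV : ConvexOn ℝ (Set.Ici 0) V) {x y : ℝ} (hx : 0 < x) (hy : 0 < y) :
    V x + V y ≤ V 0 + V (x + y) := by
  have hs : 0 < x + y := by positivity
  have m0 : (0:ℝ) ∈ Set.Ici (0:ℝ) := by simp
  have ms : x + y ∈ Set.Ici (0:ℝ) := hs.le
  have e : y / (x + y) + x / (x + y) = 1 := by field_simp; ring
  have a := hV.2 m0 ms (show 0 ≤ y / (x+y) by positivity) (show 0 ≤ x / (x+y) by positivity) e
  have b := hV.2 m0 ms (show 0 ≤ x / (x+y) by positivity) (show 0 ≤ y / (x+y) by positivity)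
    (by rw [add_comm]; exact e)
  simp only [smul_eq_mul, mul_zero, zero_add] at a b
  rw [div_mul_cancel₀ _ hs.ne'] at a b
  have : V 0 + V (x+y) = (y / (x + y) + x / (x + y)) * (V 0 + V (x+y)) := by rw [e, one_mul]
  rw [this]
  linarith

/-- if `V` is convex on `[0, ∞)` with `∫₀^∞ e^{-V} < ∞` and `∫₀^∞ y e^{-V(y)} dy < ∞`,
then `e^{-V(0)} ∫₀^∞ y e^{-V(y)} dy ≤ (∫₀^∞ e^{-V(y)} dy)²`. -/
theorem integral_inequality_of_convex (V : ℝ → ℝ) (hV : ConvexOn ℝ (Set.Ici 0) V)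
    (h1 : IntegrableOn (fun y => Real.exp (-V y)) (Set.Ioi 0))
    (h2 : IntegrableOn (fun y => y * Real.exp (-V y)) (Set.Ioi 0)) :
    Real.exp (-V 0) * ∫ y in Set.Ioi (0:ℝ), y * Real.exp (-V y)
      ≤ (∫ y in Set.Ioi (0:ℝ), Real.exp (-V y)) ^ 2 := by
  set F : ℝ → ENNReal := fun y => ENNReal.ofReal (Real.exp (-V y)) with hF
  have hFm : AEMeasurable F (volume.restrict (Ioi 0)) := h1.aestronglyMeasurable.aemeasurable.ennreal_ofReal
  have key : ∀ t ∈ Ioi (0:ℝ), F 0 * ∫⁻ s in Ioi t, F s ≤ F t * ∫⁻ s in Ioi 0, F s := by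
    intro t ht
    have sh : ∫⁻ s in Ioi t, F s = ∫⁻ s in Ioi 0, F (t + s) := by
      rw [← lintegral_indicator measurableSet_Ioi, ← lintegral_indicator measurableSet_Ioi,
        ← lintegral_add_left_eq_self _ t]
      congr 1; ext s
      simp [indicator]
    rw [sh, ← lintegral_const_mul' _ _ ENNReal.ofReal_ne_top,
      ← lintegral_const_mul' _ _ ENNReal.ofReal_ne_top]
    refine setLIntegral_mono' measurableSet_Ioi fun s hs => ?_
    simp only [hF]
    rw [← ENNReal.ofReal_mul (exp_pos _).le, ← ENNReal.ofReal_mul (exp_pos _).le, ← Real.exp_add,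
      ← Real.exp_add]
    refine ENNReal.ofReal_le_ofReal (Real.exp_le_exp.2 ?_)
    have := aux_convex V hV ht hs
    linarith
  have lay : ∫⁻ y in Ioi (0:ℝ), ENNReal.ofReal (y * Real.exp (-V y))
      = ∫⁻ t in Ioi (0:ℝ), ∫⁻ s in Ioi t, F s := by
    have h := lintegral_eq_lintegral_meas_lt ((volume.restrict (Ioi (0:ℝ))).withDensity F)
      (f := id) ((withDensity_absolutelyContinuous _ _).ae_le
        ((ae_restrict_mem measurableSet_Ioi).mono fun x hx => le_of_lt hx)) aemeasurable_id
    rw [lintegral_withDensity_eq_lintegral_mul₀ hFm (by fun_prop)] at h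
    convert h using 1
    · refine setLIntegral_congr_fun measurableSet_Ioi fun y hy => ?_
      simp only [hF, Pi.mul_apply, id]
      rw [ENNReal.ofReal_mul (le_of_lt hy), mul_comm]
    · refine setLIntegral_congr_fun measurableSet_Ioi fun t ht => ?_
      change _ = (Measure.withDensity _ _) (Ioi t)
      rw [withDensity_apply _ measurableSet_Ioi, Measure.restrict_restrict measurableSet_Ioi,
        inter_eq_left.2 (Ioi_subset_Ioi (le_of_lt ht))]
  have main : F 0 * ∫⁻ y in Ioi (0:ℝ), ENNReal.ofReal (y * Real.exp (-V y))
      ≤ (∫⁻ s in Ioi 0, F s) * ∫⁻ s in Ioi 0, F s := by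
    rw [lay, ← lintegral_const_mul' _ _ ENNReal.ofReal_ne_top, ← lintegral_mul_const'' _ hFm]
    exact setLIntegral_mono' measurableSet_Ioi key
  have n1 : 0 ≤ ∫ y in Set.Ioi (0:ℝ), Real.exp (-V y) := integral_nonneg fun _ => (exp_pos _).le
  rw [← ofReal_integral_eq_lintegral_ofReal h2
      ((ae_restrict_mem measurableSet_Ioi).mono fun x hx => mul_nonneg (le_of_lt hx) (exp_pos _).le),
    ← ofReal_integral_eq_lintegral_ofReal h1 (ae_of_all _ fun _ => (exp_pos _).le),
    ← ENNReal.ofReal_mul (exp_pos _).le, ← ENNReal.ofReal_mul n1] at main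
  rw [pow_two]
  exact (ENNReal.ofReal_le_ofReal_iff (mul_nonneg n1 n1)).1 main
end

section
/- Let V : [0, ∞) → ℝ be convex with ∫₀^∞ e^{-V(y)} dy < ∞ and ∫₀^∞ y e^{-V(y)} dy < ∞, and let V'₊ denote the right derivative of V. Then ∫₀^∞ e^{-V(y)} dy = ∫₀^∞ y V'₊(y) e^{-V(y)} dy. -/
open MeasureTheory Real Set

/-- The right derivative `V'₊(y)` of a function `V : ℝ → ℝ` at `y`. -/
noncomputable def rightDeriv (V : ℝ → ℝ) (y : ℝ) : ℝ :=
  derivWithin V (Set.Ioi y) y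

open Filter Topology

theorem integral_eq_integral_mul_rightDeriv (V : ℝ → ℝ) (hV : ConvexOn ℝ (Set.Ici 0) V)
    (h1 : IntegrableOn (fun y => Real.exp (-V y)) (Set.Ioi 0))
    (h2 : IntegrableOn (fun y => y * Real.exp (-V y)) (Set.Ioi 0)) :
    ∫ y in Set.Ioi (0:ℝ), Real.exp (-V y)
      = ∫ y in Set.Ioi (0:ℝ), y * rightDeriv V y * Real.exp (-V y) := by
  have hint : ∀ y : ℝ, 0 < y → y ∈ interior (Ici (0:ℝ)) := by
    intro y hy; rw [interior_Ici]; exact hy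
  have hslope : ∀ x y : ℝ, 0 ≤ x → x < y → V y - V x ≤ rightDeriv V y * (y - x) := by
    intro x y hx hxy
    have hy := hint y (hx.trans_lt hxy)
    have h := (hV.slope_le_leftDeriv_of_mem_interior hx hy hxy).trans
      (hV.leftDeriv_le_rightDeriv_of_mem_interior hy)
    rw [slope_def_field, div_le_iff₀ (sub_pos.2 hxy)] at h
    exact h
  have hslope2 : ∀ x y : ℝ, 0 < x → x < y → rightDeriv V x * (y - x) ≤ V y - V x := by
    intro x y hx hxy
    have h := hV.rightDeriv_le_slope_of_mem_interior (hint x hx) (hx.trans hxy).le hxy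
    rw [slope_def_field, le_div_iff₀ (sub_pos.2 hxy)] at h
    exact h
  have hc : ∃ c, 1 < c ∧ V 1 < V c := by
    by_contra! hcon
    have h : IntegrableOn (fun _ : ℝ => Real.exp (-V 1)) (Ioi 1) := by
      refine Integrable.mono' (h1.mono_set (Ioi_subset_Ioi zero_le_one)) (by fun_prop) ?_
      refine (ae_restrict_mem measurableSet_Ioi).mono fun y hy => ?_
      rw [Real.norm_eq_abs, abs_of_pos (exp_pos _)]
      exact Real.exp_le_exp.2 (neg_le_neg (hcon y hy))
    rw [integrableOn_const_iff] at h
    simp [(exp_pos _).ne'] at h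
  obtain ⟨c, hc1, hcV⟩ := hc
  have hc0 : 0 < c := by linarith
  set k := rightDeriv V c with hk
  have hkpos : 0 < k := by
    have := hslope 1 c zero_le_one hc1
    by_contra! h
    nlinarith
  have hlow : ∀ y, 0 ≤ y → V c + k * (y - c) ≤ V y := by
    intro y hy
    rcases lt_trichotomy y c with h | h | h
    · have := hslope y c hy h
      rw [← hk] at this; linarith
    · simp [h]
    · have := hslope2 c y hc0 h
      rw [← hk] at this; linarith
  set m := V c - k * c with hm
  set K := m - V 0 with hK
  have hcontV : ContinuousOn V (Ioi 0) := by
    have := hV.continuousOn_interior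
    rwa [interior_Ici] at this
  have hmono : MonotoneOn (rightDeriv V) (Ioi 0) := by
    have := hV.monotoneOn_rightDeriv
    rw [interior_Ici] at this
    exact this
  set F : ℝ → ℝ := fun y => y * Real.exp (-V y) with hF
  have hFcont : ContinuousOn F (Ioi 0) := by
    exact continuousOn_id.mul hcontV.neg.rexp
  set g : ℝ → ℝ := fun y => y * rightDeriv V y * Real.exp (-V y) with hg
  set F' : ℝ → ℝ := fun y => Real.exp (-V y) - g y with hF'
  have hder : ∀ y, 0 < y → HasDerivWithinAt F (F' y) (Ioi y) y := by
    intro y hy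
    have hd : HasDerivWithinAt V (rightDeriv V y) (Ioi y) y :=
      hV.hasDerivWithinAt_rightDeriv_of_mem_interior (hint y hy)
    have := (hasDerivWithinAt_id y (Ioi y)).mul hd.neg.exp
    refine this.congr_deriv ?_
    simp only [hF', hg, id, Pi.neg_apply]
    ring
  have hgint : ∀ a b, 0 < a → IntegrableOn g (Icc a b) := by
    intro a b ha
    have hsub : Icc a b ⊆ Ioi 0 := fun x hx => ha.trans_le hx.1
    have h := ((hmono.mono hsub).integrableOn_isCompact (μ := volume) isCompact_Icc).mul_continuousOn
      (hFcont.mono hsub) isCompact_Icc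
    refine h.congr_fun (fun x _ => ?_) measurableSet_Icc
    simp only [hg, hF]; ring
  have heint : ∀ a b, 0 < a → IntegrableOn (fun y => Real.exp (-V y)) (Icc a b) := by
    intro a b ha
    exact h1.mono_set fun x hx => ha.trans_le hx.1
  have hFTC : ∀ a b, 0 < a → a ≤ b → ∫ y in Ioc a b, F' y = F b - F a := by
    intro a b ha hab
    rw [← intervalIntegral.integral_of_le hab]
    refine intervalIntegral.integral_eq_sub_of_hasDeriv_right_of_le hab
      (hFcont.mono fun x hx => ha.trans_le hx.1) (fun x hx => hder x (ha.trans hx.1)) ?_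
    rw [intervalIntegrable_iff_integrableOn_Icc_of_le hab]
    exact (heint a b ha).sub (hgint a b ha)
  -- limits
  have hFnn : ∀ y, 0 ≤ y → 0 ≤ F y := fun y hy => mul_nonneg hy (exp_pos _).le
  have hFle : ∀ y, 0 ≤ y → F y ≤ Real.exp (-m) * (y * Real.exp (-k * y)) := by
    intro y hy
    have : Real.exp (-V y) ≤ Real.exp (-m) * Real.exp (-k * y) := by
      rw [← Real.exp_add]
      apply Real.exp_le_exp.2
      have := hlow y hy
      rw [hm]; linarith
    calc F y ≤ y * (Real.exp (-m) * Real.exp (-k * y)) := mul_le_mul_of_nonneg_left this hy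
      _ = _ := by ring
  let b : ℕ → ℝ := fun n => (n:ℝ) + 1
  let a : ℕ → ℝ := fun n => 1 / ((n:ℝ) + 1)
  have hb : Tendsto b atTop atTop := tendsto_atTop_add_const_right _ _ tendsto_natCast_atTop_atTop
  have ha : Tendsto a atTop (𝓝 0) := tendsto_one_div_add_atTop_nhds_zero_nat
  have hapos : ∀ n, 0 < a n := fun n => by positivity
  have hbpos : ∀ n, 0 < b n := fun n => by positivity
  have hab : ∀ n, a n ≤ b n := fun n => by
    have h : (1:ℝ) ≤ (n:ℝ) + 1 := by have := Nat.cast_nonneg (α := ℝ) n; linarith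
    exact ((div_le_one (by positivity)).2 h).trans h
  have hFb : Tendsto (fun n => F (b n)) atTop (𝓝 0) := by
    refine squeeze_zero (fun n => hFnn _ (hbpos n).le) (fun n => hFle _ (hbpos n).le) ?_
    have := (tendsto_rpow_mul_exp_neg_mul_atTop_nhds_zero 1 k hkpos).const_mul (Real.exp (-m))
    simp only [rpow_one, mul_zero] at this
    exact this.comp hb
  have hFa : Tendsto (fun n => F (a n)) atTop (𝓝 0) := by
    refine squeeze_zero (fun n => hFnn _ (hapos n).le) (fun n => hFle _ (hapos n).le) ?_
    have h : Continuous fun y : ℝ => Real.exp (-m) * (y * Real.exp (-k * y)) := by fun_prop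
    have := (h.tendsto 0).comp ha
    simpa [Function.comp_def] using this
  have hcov : AECover (volume.restrict (Ioi (0:ℝ))) atTop (fun n => Ioc (a n) (b n)) :=
    (aecover_Ioi_of_Ioi ha).inter (aecover_Iic hb)
  have hres : ∀ n, (volume.restrict (Ioi (0:ℝ))).restrict (Ioc (a n) (b n))
      = volume.restrict (Ioc (a n) (b n)) := fun n => by
    rw [Measure.restrict_restrict measurableSet_Ioc, inter_eq_left.2]
    exact fun x hx => (hapos n).trans hx.1
  set h : ℝ → ℝ := fun y => g y - K * Real.exp (-V y) with hh
  have hhnn : ∀ y, 0 < y → 0 ≤ h y := by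
    intro y hy
    have e1 := hslope 0 y le_rfl hy
    have e2 := hlow y hy.le
    have e3 : 0 ≤ k * y := by positivity
    have : K ≤ y * rightDeriv V y := by rw [hK, hm]; nlinarith
    have := mul_le_mul_of_nonneg_right this (exp_pos (-V y)).le
    simp only [hh, hg]; linarith
  have hhint : ∀ n, IntegrableOn h (Ioc (a n) (b n)) := fun n =>
    ((hgint _ _ (hapos n)).sub ((heint _ _ (hapos n)).const_mul K)).mono_set Ioc_subset_Icc_self
  have hlim : Tendsto (fun n => ∫ y in Ioc (a n) (b n), h y ∂(volume.restrict (Ioi (0:ℝ)))) atTop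
      (𝓝 ((1 - K) * ∫ y in Ioi (0:ℝ), Real.exp (-V y))) := by
    have e := ((hcov.integral_tendsto_of_countably_generated h1).const_mul (1 - K)).sub
      (hFb.sub hFa)
    simp only [sub_zero] at e
    refine e.congr fun n => ?_
    rw [hres, ← hFTC _ _ (hapos n) (hab n), ← integral_const_mul, ← integral_sub]
    · refine integral_congr_ae (ae_of_all _ fun y => ?_)
      simp only [hh, hF']; ring
    · exact ((heint _ _ (hapos n)).mono_set Ioc_subset_Icc_self).const_mul _
    · exact ((heint _ _ (hapos n)).sub (hgint _ _ (hapos n))).mono_set Ioc_subset_Icc_self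
  have hnn : ∀ᵐ y ∂(volume.restrict (Ioi (0:ℝ))), 0 ≤ h y :=
    (ae_restrict_mem measurableSet_Ioi).mono fun y hy => hhnn y hy
  have hhI : Integrable h (volume.restrict (Ioi (0:ℝ))) := by
    refine hcov.integrable_of_integral_tendsto_of_nonneg_ae _ (fun n => ?_) hnn hlim
    rw [IntegrableOn, hres]
    exact hhint n
  have hI := hcov.integral_eq_of_tendsto _ hhI hlim
  have : ∫ y in Ioi (0:ℝ), g y = (∫ y in Ioi (0:ℝ), h y) + K * ∫ y in Ioi (0:ℝ), Real.exp (-V y) := by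
    rw [← integral_const_mul, ← integral_add hhI (h1.const_mul K)]
    refine integral_congr_ae (ae_of_all _ fun y => ?_)
    simp only [hh]; ring
  rw [this, hI]; ring
end

section
/- Let V : ℝ → ℝ be convex with ∫_ℝ e^{-V(x)} dx < ∞ and ∫_ℝ |x| e^{-V(x)} dx < ∞. Then the mean residual life function m(t) = (∫_t^∞ (x − t) e^{-V(x)} dx) / (∫_t^∞ e^{-V(x)} dx) is nonincreasing in t on ℝ. -/
open MeasureTheory Real Set

lemma conv_aux (V : ℝ → ℝ) (hV : ConvexOn ℝ Set.univ V) (a b h : ℝ) (hab : a ≤ b) (hh : 0 < h) :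
    V b + V (a + h) ≤ V a + V (b + h) := by
  have hd : 0 < b - a + h := by linarith
  have e : h / (b - a + h) + (b - a) / (b - a + h) = 1 := by field_simp; ring
  have p1 : 0 ≤ h / (b - a + h) := by positivity
  have p2 : 0 ≤ (b - a) / (b - a + h) := div_nonneg (by linarith) hd.le
  have i1 := hV.2 (mem_univ a) (mem_univ (b + h)) p1 p2 e
  have i2 := hV.2 (mem_univ a) (mem_univ (b + h)) p2 p1 (by linarith)
  simp only [smul_eq_mul] at i1 i2
  have e1 : h / (b - a + h) * a + (b - a) / (b - a + h) * (b + h) = b := by field_simp; ring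
  have e2 : (b - a) / (b - a + h) * a + h / (b - a + h) * (b + h) = a + h := by field_simp; ring
  rw [e1] at i1
  rw [e2] at i2
  have e3 : (b - a) / (b - a + h) = 1 - h / (b - a + h) := by linarith
  rw [e3] at i1 i2
  linarith

lemma shift_aux (g : ℝ → ℝ) (t : ℝ) :
    ∫ x in Ioi t, g x = ∫ u in Ioi (0:ℝ), g (u + t) := by
  rw [← integral_indicator measurableSet_Ioi, ← integral_indicator measurableSet_Ioi,
    ← integral_add_right_eq_self _ t]
  congr 1
  ext u
  simp [indicator]

/-- if `V : ℝ → ℝ` is convex with `∫ e^{-V} < ∞` and `∫ |x| e^{-V(x)} dx < ∞`,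
then the mean residual life function
`m(t) = (∫_t^∞ (x − t) e^{-V(x)} dx) / (∫_t^∞ e^{-V(x)} dx)` is nonincreasing on `ℝ`. -/
theorem meanResidualLife_antitone (V : ℝ → ℝ) (hV : ConvexOn ℝ Set.univ V)
    (h1 : Integrable (fun x => Real.exp (-V x)))
    (h2 : Integrable (fun x => |x| * Real.exp (-V x))) :
    Antitone (fun t : ℝ =>
      (∫ x in Set.Ioi t, (x - t) * Real.exp (-V x)) / ∫ x in Set.Ioi t, Real.exp (-V x)) := by
  intro s t hst
  rcases hst.eq_or_lt with rfl | hlt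
  · exact le_rfl
  have hpos : ∀ t : ℝ, 0 < ∫ x in Ioi t, exp (-V x) := by
    intro t
    rw [setIntegral_pos_iff_support_of_nonneg_ae (ae_of_all _ fun x => (exp_pos _).le)
      h1.integrableOn]
    have : Function.support (fun x => exp (-V x)) = univ := by
      ext x; simp [(exp_pos _).ne']
    rw [this]; simp
  have h3 : Integrable (fun x => x * exp (-V x)) := by
    refine h2.mono (aestronglyMeasurable_id.mul h1.1) (ae_of_all _ fun x => ?_)
    simp
  have hint : ∀ t c : ℝ, Integrable (fun u => (u - c) * exp (-V (u + t))) := by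
    intro t c
    have := (h3.sub (h1.const_mul (t + c))).comp_add_right t
    refine this.congr (ae_of_all _ fun u => ?_)
    simp only [Pi.sub_apply]
    ring
  have key : ∀ t c : ℝ, ∫ u in Ioi (0:ℝ), (u - c) * exp (-V (u + t)) =
      (∫ x in Ioi t, (x - t) * exp (-V x)) - c * ∫ x in Ioi t, exp (-V x) := by
    intro t c
    rw [shift_aux (fun x => (x - t) * exp (-V x)), shift_aux (fun x => exp (-V x)),
      ← integral_const_mul, ← integral_sub]
    · congr 1; ext u; ring
    · have := (hint t 0).integrableOn (s := Ioi 0)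
      simpa [IntegrableOn] using this
    · exact ((h1.comp_add_right t).const_mul c).integrableOn
  show (∫ x in Ioi t, (x - t) * exp (-V x)) / (∫ x in Ioi t, exp (-V x)) ≤ 
    (∫ x in Ioi s, (x - s) * exp (-V x)) / (∫ x in Ioi s, exp (-V x))
  set a := (∫ x in Ioi s, (x - s) * exp (-V x)) / (∫ x in Ioi s, exp (-V x)) with ha
  have hz : ∫ u in Ioi (0:ℝ), (u - a) * exp (-V (u + s)) = 0 := by
    rw [key, ha, div_mul_cancel₀ _ (hpos s).ne', sub_self]
  have hle : ∫ u in Ioi (0:ℝ), (u - a) * exp (-V (u + t)) ≤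
      ∫ u in Ioi (0:ℝ), exp (V (a + s) - V (a + t)) * ((u - a) * exp (-V (u + s))) := by
    refine integral_mono (hint t a).integrableOn ((hint s a).const_mul _).integrableOn
      fun u => ?_
    simp only
    rw [mul_left_comm, ← exp_add]
    rcases le_total a u with hu | hu
    · refine mul_le_mul_of_nonneg_left (exp_le_exp.2 ?_) (by linarith)
      have := conv_aux V hV (a + s) (u + s) (t - s) (by linarith) (by linarith)
      rw [show a + s + (t - s) = a + t by ring, show u + s + (t - s) = u + t by ring] at this
      linarith
    · refine mul_le_mul_of_nonpos_left (exp_le_exp.2 ?_) (by linarith)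
      have := conv_aux V hV (u + s) (a + s) (t - s) (by linarith) (by linarith)
      rw [show a + s + (t - s) = a + t by ring, show u + s + (t - s) = u + t by ring] at this
      linarith
  rw [integral_const_mul, hz, mul_zero, key] at hle
  rw [div_le_iff₀ (hpos t)]
  linarith
end

section
/- Let X be a real random variable, G : ℝ → ℝ convex, and fix α, β ∈ ℝ, assuming E[G(X − α)] and E[G(X − β)] are finite. Set A_{α,β} = {x ∈ ℝ : G(x − α) ≤ G(x − β)}. Then for every Borel set A ⊆ ℝ, E[G(X − α)·1_{A_{α,β}}(X) + G(X − β)·1_{A_{α,β}^c}(X)] ≤ E[G(X − α)·1_A(X) + G(X − β)·1_{A^c}(X)]. Moreover, if α < β then A_{α,β} is an interval of the form (−∞, u₀], the empty set, or all of ℝ (i.e. it is a lower set of ℝ). -/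
open MeasureTheory Real Set

open scoped Classical
/-- for a convex loss `G` and fixed `α, β`, the set
`A_{α,β} = {x : G(x−α) ≤ G(x−β)}` minimizes
`A ↦ E[G(X−α)·1_A(X) + G(X−β)·1_{A^c}(X)]` over Borel sets `A ⊆ ℝ`; moreover if `α < β` then
`A_{α,β}` is a lower set of `ℝ` (i.e. of the form `(−∞, u₀]`, `∅`, or `ℝ`). -/
theorem optimal_regime_set_halfline {Ω : Type*} [MeasurableSpace Ω]
    (P : Measure Ω) [IsProbabilityMeasure P] (X : Ω → ℝ) (hX : Measurable X)
    (G : ℝ → ℝ) (hG : ConvexOn ℝ Set.univ G) (α β : ℝ)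
    (hint1 : Integrable (fun ω => G (X ω - α)) P)
    (hint2 : Integrable (fun ω => G (X ω - β)) P) :
    (∀ A : Set ℝ, MeasurableSet A →
      (∫ ω, (if X ω ∈ {x : ℝ | G (x - α) ≤ G (x - β)}
          then G (X ω - α) else G (X ω - β)) ∂P)
        ≤ ∫ ω, (if X ω ∈ A then G (X ω - α) else G (X ω - β)) ∂P)
      ∧ (α < β → IsLowerSet {x : ℝ | G (x - α) ≤ G (x - β)}) := by
  have key : ∀ A : Set ℝ, MeasurableSet A →
      Integrable (fun ω => if X ω ∈ A then G (X ω - α) else G (X ω - β)) P := by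
    intro A hA
    have h := Integrable.piecewise (hX hA) hint1.integrableOn hint2.integrableOn
    refine h.congr (Filter.Eventually.of_forall fun ω => ?_)
    by_cases hω : X ω ∈ A <;> simp [Set.piecewise, hω]
  have hc : Continuous G := by
    rw [← continuousOn_univ]
    exact hG.continuousOn isOpen_univ
  have hM : MeasurableSet {x : ℝ | G (x - α) ≤ G (x - β)} :=
    (isClosed_le (by fun_prop) (by fun_prop)).measurableSet
  refine ⟨fun A hA => ?_, fun hab => ?_⟩
  · refine integral_mono ?_ (key A hA) fun ω => ?_
    · refine (key _ hM).congr (Filter.Eventually.of_forall fun ω => ?_)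
      by_cases hω : G (X ω - α) ≤ G (X ω - β) <;> simp [hω]
    · by_cases h1 : G (X ω - α) ≤ G (X ω - β) <;> by_cases h2 : X ω ∈ A <;> simp [h1, h2]
      exact (not_le.mp h1).le
  · intro x y hyx hx
    simp only [Set.mem_setOf_eq] at hx ⊢
    have hd : 0 < (x - y) + (β - α) := by linarith
    have ht0 : 0 ≤ (x - y) / ((x - y) + (β - α)) := div_nonneg (by linarith) hd.le
    have hs0 : 0 ≤ (β - α) / ((x - y) + (β - α)) := div_nonneg (by linarith) hd.le
    have hst : (x - y) / ((x - y) + (β - α)) + (β - α) / ((x - y) + (β - α)) = 1 := by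
      field_simp
    have hmul : (x - y) / ((x - y) + (β - α)) * ((x - y) + (β - α)) = x - y := by
      field_simp
    generalize (x - y) / ((x - y) + (β - α)) = t at *
    generalize (β - α) / ((x - y) + (β - α)) = s at *
    have e1 := hG.2 (mem_univ (y - β)) (mem_univ (x - α)) ht0 hs0 hst
    have e2 := hG.2 (mem_univ (y - β)) (mem_univ (x - α)) hs0 ht0 (by linarith)
    obtain rfl : s = 1 - t := by linarith
    simp only [smul_eq_mul] at e1 e2
    rw [show t * (y - β) + (1 - t) * (x - α) = y - α by linear_combination -hmul] at e1
    rw [show (1 - t) * (y - β) + t * (x - α) = x - β by linear_combination hmul] at e2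
    linarith
end

section
/- Let G : ℝ^d → ℝ be convex, α, β ∈ ℝ^d with δ = β − α, and A_{α,β} = {x ∈ ℝ^d : G(x − α) ≤ G(x − β)}. Then for every z ∈ ℝ^d, the set {s ∈ ℝ : z + sδ ∈ A_{α,β}} is a lower set of ℝ, i.e. the intersection of A_{α,β} with the affine line z + ℝδ is (parametrized by s) either empty, all of ℝ, or a half-line of the form (−∞, s₀] or (−∞, s₀). -/
open MeasureTheory Real Set

/-- for a convex `G : ℝ^d → ℝ`, `α, β ∈ ℝ^d` with `δ = β − α`, and
`A_{α,β} = {x : G(x−α) ≤ G(x−β)}`, for every `z ∈ ℝ^d` the set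
`{s ∈ ℝ : z + sδ ∈ A_{α,β}}` is a lower set of `ℝ` (empty, all of `ℝ`, or a half-line
`(−∞, s₀]` or `(−∞, s₀)`). -/
theorem directional_one_crossing {d : ℕ}
    (G : EuclideanSpace ℝ (Fin d) → ℝ) (hG : ConvexOn ℝ Set.univ G)
    (α β : EuclideanSpace ℝ (Fin d)) (δ : EuclideanSpace ℝ (Fin d)) (hδ : δ = β - α) :
    ∀ z : EuclideanSpace ℝ (Fin d),
      IsLowerSet {s : ℝ | z + s • δ ∈
        {x : EuclideanSpace ℝ (Fin d) | G (x - α) ≤ G (x - β)}} := by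
  intro z a b hba ha
  simp only [Set.mem_setOf_eq] at ha ⊢
  obtain rfl : β = α + δ := by rw [hδ]; abel
  clear hδ
  obtain ⟨u, hu, rfl⟩ : ∃ u : ℝ, 0 ≤ u ∧ a = b + u := ⟨a - b, by linarith, by ring⟩
  have hp : 0 < 1 + u := by linarith
  have hne : 1 + u ≠ 0 := hp.ne'
  have hsum : u / (1 + u) + 1 / (1 + u) = 1 := by field_simp; ring
  have h0 : 0 ≤ u / (1 + u) := by positivity
  have h1 : 0 ≤ 1 / (1 + u) := by positivity
  have c1 := hG.2 (Set.mem_univ (z + b • δ - (α + δ))) (Set.mem_univ (z + (b + u) • δ - α))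
    h0 h1 hsum
  have c2 := hG.2 (Set.mem_univ (z + (b + u) • δ - α)) (Set.mem_univ (z + b • δ - (α + δ)))
    h0 h1 hsum
  have e1 : (u / (1 + u)) • (z + b • δ - (α + δ)) + (1 / (1 + u)) • (z + (b + u) • δ - α)
      = z + b • δ - α := by
    match_scalars <;> field_simp <;> ring
  have e2 : (u / (1 + u)) • (z + (b + u) • δ - α) + (1 / (1 + u)) • (z + b • δ - (α + δ))
      = z + (b + u) • δ - (α + δ) := by
    match_scalars <;> field_simp <;> ring
  rw [e1] at c1
  rw [e2] at c2
  simp only [smul_eq_mul] at c1 c2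
  have hx : ∀ x : ℝ, u / (1 + u) * x + 1 / (1 + u) * x = x := fun x => by
    rw [← add_mul, hsum, one_mul]
  have k1 := hx (G (z + b • δ - (α + δ)))
  have k2 := hx (G (z + (b + u) • δ - α))
  linarith
end

section
/- Let X be a random vector in ℝ^d whose law has density x ↦ C·g(xᵀΣ⁻¹x) with respect to Lebesgue measure, where Σ is a positive definite d×d matrix, g : [0, ∞) → [0, ∞) is measurable, C > 0 is the normalizing constant, and E[‖X‖] < ∞ (so X is centered elliptical with E[X] = 0). Let u, v ∈ ℝ^d be linearly independent. Then the conditional expectation of ⟨X, u⟩ given the σ-algebra generated by ⟨X, v⟩ satisfies E[⟨X, u⟩ | σ(⟨X, v⟩)] = (uᵀΣv / vᵀΣv) · ⟨X, v⟩ almost surely. -/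
open MeasureTheory Real Set
open scoped RealInnerProductSpace

lemma aux_preserve {E : Type*} [NormedAddCommGroup E] [InnerProductSpace ℝ E]
    [FiniteDimensional ℝ E] [MeasurableSpace E] [BorelSpace E]
    (T : E →ₗ[ℝ] E) (hT : ∀ x, T (T x) = x) (f : E → ENNReal) (hf : ∀ x, f (T x) = f x) :
    MeasurePreserving T ((volume : Measure E).withDensity f) (volume.withDensity f) := by
  have hTm : Measurable T := (LinearMap.continuous_of_finiteDimensional T).measurable
  have hcomp : T ∘ₗ T = LinearMap.id := LinearMap.ext hT
  have hdet : LinearMap.det T * LinearMap.det T = 1 := by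
    rw [← LinearMap.det_comp, hcomp, LinearMap.det_id]
  have hne : LinearMap.det T ≠ 0 := by
    intro h
    simp [h] at hdet
  have habs : |(LinearMap.det T)⁻¹| = 1 := by
    rcases mul_self_eq_one_iff.mp hdet with h | h <;> simp [h]
  have hv : MeasurePreserving T (volume : Measure E) volume := by
    refine ⟨hTm, ?_⟩
    rw [Measure.map_linearMap_addHaar_eq_smul_addHaar _ hne, habs]
    simp
  let e : E ≃ᵐ E :=
    { toFun := T, invFun := T, left_inv := hT, right_inv := hT,
      measurable_toFun := hTm, measurable_invFun := hTm }
  have hemb : MeasurableEmbedding T := e.measurableEmbedding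
  refine ⟨hTm, ?_⟩
  ext s hs
  rw [Measure.map_apply hTm hs, withDensity_apply _ (hTm hs), withDensity_apply _ hs,
    ← hv.setLIntegral_comp_preimage_emb hemb]
  have hss : T ⁻¹' (T ⁻¹' s) = s := by
    ext x
    simp only [mem_preimage, hT]
  simp only [hf, hss]

/-- for a centered elliptical random vector `X` in `ℝ^d` with positive definite
scatter matrix `Σ` (density `x ↦ C·g(xᵀΣ⁻¹x)`), `E[‖X‖] < ∞`, and linearly independent
`u, v ∈ ℝ^d`, the conditional expectation of `⟨X, u⟩` given `σ(⟨X, v⟩)` is linear: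
`E[⟨X, u⟩ | σ(⟨X, v⟩)] = (uᵀΣv / vᵀΣv)·⟨X, v⟩` a.s. -/
theorem elliptical_conditional_expectation_linear {Ω : Type*} [MeasurableSpace Ω] {d : ℕ}
    (P : Measure Ω) [IsProbabilityMeasure P]
    (X : Ω → EuclideanSpace ℝ (Fin d)) (hX : Measurable X)
    (S : Matrix (Fin d) (Fin d) ℝ) (hS : S.PosDef)
    (g : ℝ → ℝ) (hg : ∀ s, 0 ≤ g s) (C : ℝ) (hC : 0 < C)
    (hdens : Measure.map X P = volume.withDensity
      (fun x => ENNReal.ofReal (C * g ⟪x, Matrix.toEuclideanLin S⁻¹ x⟫)))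
    (hint : Integrable (fun ω => ‖X ω‖) P)
    (u v : EuclideanSpace ℝ (Fin d)) (huv : LinearIndependent ℝ ![u, v]) :
    P[(fun ω => ⟪X ω, u⟫) |
        MeasurableSpace.comap (fun ω => ⟪X ω, v⟫) inferInstance]
      =ᵐ[P] fun ω =>
        (⟪u, Matrix.toEuclideanLin S v⟫ / ⟪v, Matrix.toEuclideanLin S v⟫) * ⟪X ω, v⟫ := by
  classical
  set A := Matrix.toEuclideanLin S with hA
  set Q := Matrix.toEuclideanLin S⁻¹ with hQ
  have hv0 : v ≠ 0 := by simpa using huv.ne_zero 1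
  have hdet : IsUnit S.det := (Matrix.isUnit_iff_isUnit_det S).mp hS.isUnit
  have hQA : ∀ x, Q (A x) = x := by
    intro x
    simp [hA, hQ, Matrix.toLpLin_apply, Matrix.mulVec_mulVec, Matrix.nonsing_inv_mul S hdet]
  have hAsym : ∀ x y, ⟪A x, y⟫ = ⟪x, A y⟫ :=
    Matrix.isSymmetric_toEuclideanLin_iff.mpr hS.isHermitian
  have hQsym : ∀ x y, ⟪Q x, y⟫ = ⟪x, Q y⟫ :=
    Matrix.isSymmetric_toEuclideanLin_iff.mpr hS.isHermitian.inv
  set a := ⟪v, A v⟫ with ha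
  have hapos : 0 < a := by
    have := hS.dotProduct_mulVec_pos (x := v.ofLp) (by simpa using hv0)
    rw [ha, hA, EuclideanSpace.inner_eq_star_dotProduct, dotProduct_comm]
    simpa [Matrix.toLpLin_apply] using this
  have hane : a ≠ 0 := hapos.ne'
  let T : EuclideanSpace ℝ (Fin d) →ₗ[ℝ] EuclideanSpace ℝ (Fin d) :=
    -LinearMap.id + ((2 / a) • (innerₛₗ ℝ v)).smulRight (A v)
  have hTx : ∀ x, T x = -x + ((2 / a) * ⟪x, v⟫) • A v := by
    intro x
    simp [T, real_inner_comm]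
  have hTv : ∀ x, ⟪T x, v⟫ = ⟪x, v⟫ := by
    intro x
    rw [hTx, inner_add_left, inner_neg_left, real_inner_smul_left, real_inner_comm v (A v), ← ha]
    field_simp
    ring
  have hTT : ∀ x, T (T x) = x := by
    intro x
    rw [hTx (T x), hTv, hTx]
    abel
  have hTq : ∀ x, ⟪T x, Q (T x)⟫ = ⟪x, Q x⟫ := by
    intro x
    have h1 : Q (T x) = -Q x + ((2 / a) * ⟪x, v⟫) • v := by
      rw [hTx, map_add, map_neg, map_smul, hQA]
    have h2 : ⟪A v, Q x⟫ = ⟪x, v⟫ := by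
      rw [← hQsym, hQA, real_inner_comm]
    rw [h1, inner_add_right, real_inner_smul_right, hTv, hTx, inner_add_left, inner_neg_left,
      inner_neg_right, inner_neg_right, real_inner_smul_left, h2]
    field_simp
    ring
  have hTu : ∀ x, ⟪T x, u⟫ = -⟪x, u⟫ + 2 * (⟪u, A v⟫ / a * ⟪x, v⟫) := by
    intro x
    rw [hTx, inner_add_left, inner_neg_left, real_inner_smul_left, real_inner_comm u (A v)]
    field_simp
  have hmp : MeasurePreserving T (Measure.map X P) (Measure.map X P) := by
    rw [hdens]
    exact aux_preserve T hTT _ (fun x => by rw [hTq])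
  have hTm := hmp.measurable
  have hXint : Integrable X P := (integrable_norm_iff hX.aestronglyMeasurable).mp hint
  have hIu : Integrable (fun ω => ⟪X ω, u⟫) P := hXint.inner_const u
  have hIv : Integrable (fun ω => ⟪X ω, v⟫) P := hXint.inner_const v
  have hIcv := hIv.const_mul (⟪u, A v⟫ / a)
  have hmv : Measurable (fun ω => ⟪X ω, v⟫) := hX.inner_const
  have hm : MeasurableSpace.comap (fun ω => ⟪X ω, v⟫) inferInstance ≤ (inferInstance : MeasurableSpace Ω) :=
    hmv.comap_le
  symm
  refine ae_eq_condExp_of_forall_setIntegral_eq hm hIu (fun _ _ _ => hIcv.integrableOn) ?_ ?_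
  · rintro _ ⟨B, hB, rfl⟩ -
    rw [← sub_eq_zero, ← integral_sub hIcv.integrableOn hIu.integrableOn]
    let D : Set (EuclideanSpace ℝ (Fin d)) := {x | ⟪x, v⟫ ∈ B}
    have hD : MeasurableSet D :=
      (measurable_id.inner_const : Measurable fun x : EuclideanSpace ℝ (Fin d) => ⟪x, v⟫) hB
    let h : EuclideanSpace ℝ (Fin d) → ℝ := fun x => ⟪u, A v⟫ / a * ⟪x, v⟫ - ⟪x, u⟫
    have hhm : Measurable h := by
      have h1 : Measurable fun x : EuclideanSpace ℝ (Fin d) => ⟪x, v⟫ := measurable_id.inner_const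
      have h2 : Measurable fun x : EuclideanSpace ℝ (Fin d) => ⟪x, u⟫ := measurable_id.inner_const
      exact (h1.const_mul _).sub h2
    have key : ∫ x in D, h x ∂(Measure.map X P) = 0 := by
      have e1 : ∫ x in D, h x ∂(Measure.map X P) = ∫ x in D, h (T x) ∂(Measure.map X P) := by
        conv_lhs => rw [← hmp.map_eq]
        rw [setIntegral_map hD hhm.aestronglyMeasurable hTm.aemeasurable]
        have : T ⁻¹' D = D := by
          ext x
          simp only [D, mem_preimage, mem_setOf_eq, hTv]
        rw [this]
      have e2 : ∀ x, h (T x) = - h x := by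
        intro x
        simp only [h, hTv, hTu]
        ring
      simp only [e2, integral_neg] at e1
      linarith
    rw [setIntegral_map hD hhm.aestronglyMeasurable hX.aemeasurable] at key
    exact key
  · exact ((comap_measurable _).const_mul _).aestronglyMeasurable
end

section
/- Let Y be a random vector in ℝ^d with a centered elliptical distribution with positive definite scatter matrix Σ (density y ↦ C·g(yᵀΣ⁻¹y) with respect to Lebesgue measure) and E[‖Y‖] < ∞, so E[Y] = 0. Fix a unit vector u and let Z = ⟨Y, u⟩. Then for every t ∈ ℝ, the vector identity E[Y·1_{Z ≤ t}] = (Σu / (uᵀΣu)) · E[Z·1_{Z ≤ t}] holds. -/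
open MeasureTheory Real Set
open scoped RealInnerProductSpace

theorem aux_refl {d : ℕ} (w u : EuclideanSpace ℝ (Fin d))
    (T : EuclideanSpace ℝ (Fin d) →ₗ[ℝ] EuclideanSpace ℝ (Fin d)) (hT : T.IsSymmetric)
    (hTw : T w = u) (hc : ⟪u, w⟫ ≠ 0) (G : ℝ → ENNReal)
    (ν : Measure (EuclideanSpace ℝ (Fin d)))
    (hν : ν = volume.withDensity (fun y => G ⟪y, T y⟫)) (t : ℝ)
    (hi : Integrable (fun y => y) ν) :
    (∫ y in {y | ⟪y, u⟫ ≤ t}, y ∂ν) =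
      ((∫ y in {y | ⟪y, u⟫ ≤ t}, ⟪y, u⟫ ∂ν) / ⟪u, w⟫) • w := by
  have hc2 : ⟪w, u⟫ = ⟪u, w⟫ := real_inner_comm _ _
  let L : EuclideanSpace ℝ (Fin d) →ₗ[ℝ] EuclideanSpace ℝ (Fin d) :=
    (2 / ⟪u, w⟫) • ((innerₗ _ u).smulRight w) - LinearMap.id
  have hL : ∀ y, L y = (2 / ⟪u, w⟫ * ⟪y, u⟫) • w - y := by
    intro y
    simp [L, smul_smul, real_inner_comm]
  have hLu : ∀ y, ⟪L y, u⟫ = ⟪y, u⟫ := by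
    intro y
    rw [hL, inner_sub_left, real_inner_smul_left, hc2]
    field_simp
    ring
  have hLL : ∀ y, L (L y) = y := by
    intro y
    rw [hL (L y), hLu, hL]
    abel
  have hLq : ∀ y, ⟪L y, T (L y)⟫ = ⟪y, T y⟫ := by
    intro y
    have h1 : ⟪w, T y⟫ = ⟪y, u⟫ := by
      rw [← hT w y, hTw, real_inner_comm]
    rw [hL, map_sub, map_smul, hTw]
    simp only [inner_sub_left, inner_sub_right, real_inner_smul_left, real_inner_smul_right, h1, hc2]
    field_simp
    ring
  have hdet : LinearMap.det L * LinearMap.det L = 1 := by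
    rw [← LinearMap.det_comp]
    have : L ∘ₗ L = LinearMap.id := by ext1 y; exact hLL y
    rw [this, LinearMap.det_id]
  have hd0 : LinearMap.det L ≠ 0 := by
    intro h; rw [h] at hdet; norm_num at hdet
  have habs : |(LinearMap.det L)⁻¹| = 1 := by
    rcases mul_self_eq_one_iff.1 hdet with h | h <;> rw [h] <;> norm_num
  have hLc : Continuous L := L.continuous_of_finiteDimensional
  have hvol : MeasurePreserving L volume volume := by
    refine ⟨hLc.measurable, ?_⟩
    rw [Measure.map_linearMap_addHaar_eq_smul_addHaar _ hd0, habs]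
    simp
  let e : EuclideanSpace ℝ (Fin d) ≃ᵐ EuclideanSpace ℝ (Fin d) :=
    { toFun := L, invFun := L, left_inv := hLL, right_inv := hLL,
      measurable_toFun := hLc.measurable, measurable_invFun := hLc.measurable }
  have hemb : MeasurableEmbedding L := e.measurableEmbedding
  have hνp : MeasurePreserving L ν ν := by
    refine ⟨hLc.measurable, ?_⟩
    ext A hA
    rw [Measure.map_apply hLc.measurable hA, hν, withDensity_apply _ hA,
      withDensity_apply _ (hLc.measurable hA),
      ← hvol.setLIntegral_comp_preimage_emb hemb]
    have hAA : L ⁻¹' (L ⁻¹' A) = A := by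
      ext y; simp [hLL]
    simp only [hLq, hAA]
  have hpre : L ⁻¹' {y | ⟪y, u⟫ ≤ t} = {y | ⟪y, u⟫ ≤ t} := by
    ext y; simp [hLu]
  have key := hνp.setIntegral_preimage_emb hemb (fun y => y) {y | ⟪y, u⟫ ≤ t}
  rw [hpre] at key
  simp only [hL] at key
  have hi2 : Integrable (fun y => ⟪y, u⟫) ν := hi.inner_const u
  rw [integral_sub ((hi2.const_mul _).smul_const w).integrableOn hi.integrableOn,
    integral_smul_const, integral_const_mul, sub_eq_iff_eq_add, ← two_smul ℝ] at key
  have h2 := congrArg (fun v => (2⁻¹ : ℝ) • v) key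
  simp only [smul_smul] at h2
  norm_num at h2
  rw [← h2]
  congr 1
  ring

/-- for a centered elliptical random vector `Y` in `ℝ^d` with positive definite
scatter matrix `Σ`, `E[‖Y‖] < ∞`, a unit vector `u`, and `Z = ⟨Y, u⟩`, one has for every `t`:
`E[Y·1_{Z≤t}] = (Σu / uᵀΣu)·E[Z·1_{Z≤t}]`. -/
theorem elliptical_truncated_mean_direction {Ω : Type*} [MeasurableSpace Ω] {d : ℕ}
    (P : Measure Ω) [IsProbabilityMeasure P]
    (Y : Ω → EuclideanSpace ℝ (Fin d)) (hY : Measurable Y)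
    (S : Matrix (Fin d) (Fin d) ℝ) (hS : S.PosDef)
    (g : ℝ → ℝ) (hg : ∀ s, 0 ≤ g s) (C : ℝ) (hC : 0 < C)
    (hdens : Measure.map Y P = volume.withDensity
      (fun y => ENNReal.ofReal (C * g ⟪y, Matrix.toEuclideanLin S⁻¹ y⟫)))
    (hint : Integrable (fun ω => ‖Y ω‖) P)
    (u : EuclideanSpace ℝ (Fin d)) (hu : ‖u‖ = 1) :
    ∀ t : ℝ,
      (∫ ω in {ω | ⟪Y ω, u⟫ ≤ t}, Y ω ∂P)
        = ((∫ ω in {ω | ⟪Y ω, u⟫ ≤ t}, ⟪Y ω, u⟫ ∂P) / ⟪u, Matrix.toEuclideanLin S u⟫)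
            • Matrix.toEuclideanLin S u := by
  intro t
  have hYi : Integrable Y P := (integrable_norm_iff hY.aestronglyMeasurable).1 hint
  have hdet : IsUnit S.det := (Matrix.isUnit_iff_isUnit_det S).1 hS.isUnit
  have hT : (Matrix.toEuclideanLin S⁻¹).IsSymmetric :=
    Matrix.isSymmetric_toEuclideanLin_iff.2 hS.inv.isHermitian
  have hTw : Matrix.toEuclideanLin S⁻¹ (Matrix.toEuclideanLin S u) = u := by
    simp [Matrix.toLpLin_apply, Matrix.mulVec_mulVec, Matrix.nonsing_inv_mul S hdet]
  have hu0 : u ≠ 0 := by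
    rintro rfl
    simp at hu
  have hc : ⟪u, Matrix.toEuclideanLin S u⟫ ≠ 0 := by
    have h0 : u.ofLp ≠ 0 := by simpa using hu0
    have h := hS.dotProduct_mulVec_pos h0
    have h3 : ⟪u, Matrix.toEuclideanLin S u⟫ = star u.ofLp ⬝ᵥ S.mulVec u.ofLp := by
      rw [EuclideanSpace.inner_eq_star_dotProduct, dotProduct_comm]
      rfl
    rw [h3]
    exact h.ne'
  have hm : MeasurableSet {y : EuclideanSpace ℝ (Fin d) | ⟪y, u⟫ ≤ t} :=
    measurableSet_le (by fun_prop) measurable_const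
  have hi : Integrable (fun y => y) (Measure.map Y P) :=
    (integrable_map_measure (by fun_prop) hY.aemeasurable).2 hYi
  have := aux_refl (Matrix.toEuclideanLin S u) u _ hT hTw hc
    (fun s => ENNReal.ofReal (C * g s)) _ hdens t hi
  rw [setIntegral_map hm (by fun_prop) hY.aemeasurable,
    setIntegral_map hm (by fun_prop) hY.aemeasurable] at this
  exact this
end

section
/- Let X be a random vector in ℝ^d with E[‖X‖²] < ∞, mean μ, and a (noncentered) elliptical density x ↦ C·g((x − μ)ᵀΣ⁻¹(x − μ)) with respect to Lebesgue measure, Σ positive definite. Assume that for every unit vector u ∈ ℝ^d, the projection Z_u = ⟨X − μ, u⟩ has a weakly symmetric log-concave density on ℝ. For a unit vector u and t ∈ ℝ with 0 < P(⟨X − μ, u⟩ ≤ t) < 1, define F(u, t) = ‖E[X·1_{A_{u,t}}(X)]‖²/P(X ∈ A_{u,t}) + ‖E[X·1_{A_{u,t}^c}(X)]‖²/P(X ∈ A_{u,t}^c), where A_{u,t} = {x ∈ ℝ^d : ⟨x − μ, u⟩ ≤ t}. Then for every fixed unit vector u and every admissible t, F(u, t) ≤ F(u, 0). -/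
open MeasureTheory Real Set
open scoped RealInnerProductSpace

/-- The halfspace objective
`F(u,t) = ‖E[X·1_{A_{u,t}}]‖²/P(X ∈ A_{u,t}) + ‖E[X·1_{A_{u,t}^c}]‖²/P(X ∈ A_{u,t}^c)` where
`A_{u,t} = {x : ⟨x − μ, u⟩ ≤ t}`. -/
noncomputable def halfspaceObjective {Ω : Type*} [MeasurableSpace Ω] {d : ℕ}
    (P : Measure Ω) (X : Ω → EuclideanSpace ℝ (Fin d))
    (μ u : EuclideanSpace ℝ (Fin d)) (t : ℝ) : ℝ :=
  ‖∫ ω in {ω | ⟪X ω - μ, u⟫ ≤ t}, X ω ∂P‖ ^ 2 / (P {ω | ⟪X ω - μ, u⟫ ≤ t}).toReal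
    + ‖∫ ω in {ω | t < ⟪X ω - μ, u⟫}, X ω ∂P‖ ^ 2 / (P {ω | t < ⟪X ω - μ, u⟫}).toReal


theorem tail_hasDeriv (f : ℝ → ℝ) (hf : Continuous f) (hi : Integrable f) (t : ℝ) :
    HasDerivAt (fun t => ∫ s in Ioi t, f s) (- f t) t := by
  have h1 : (fun t => ∫ s in Ioi t, f s) = fun t => (∫ s in Ioi 0, f s) - ∫ s in (0:ℝ)..t, f s := by
    funext t
    rw [eq_sub_iff_add_eq, add_comm]
    exact intervalIntegral.integral_interval_add_Ioi' hi.intervalIntegrable hi.integrableOn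
  rw [h1]
  have := intervalIntegral.integral_hasDerivAt_right (hf.intervalIntegrable 0 t)
    (hf.stronglyMeasurableAtFilter _ _) hf.continuousAt
  simpa using this.const_sub (∫ s in Ioi 0, f s)

theorem tail_tendsto_s17 (f : ℝ → ℝ) (hi : Integrable f) :
    Filter.Tendsto (fun t => ∫ s in Ioi t, f s) Filter.atTop (nhds 0) := by
  have h1 : (fun t => ∫ s in Ioi t, f s) = fun t => (∫ s in Ioi 0, f s) - ∫ s in (0:ℝ)..t, f s := by
    funext t
    rw [eq_sub_iff_add_eq, add_comm]
    exact intervalIntegral.integral_interval_add_Ioi' hi.intervalIntegrable hi.integrableOn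
  rw [h1]
  simpa using (intervalIntegral_tendsto_integral_Ioi 0 hi.integrableOn Filter.tendsto_id).const_sub
    (∫ s in Ioi 0, f s)

theorem oneD_pos (φ : ℝ → ℝ) (hc : Continuous φ) (hp : ∀ s, 0 < φ s) (hev : ∀ s, φ (-s) = φ s)
    (hlc : ∀ s x, 0 ≤ s → 0 ≤ x → φ 0 * φ (s + x) ≤ φ s * φ x)
    (hmax : ∀ s, φ s ≤ φ 0) (hi : Integrable φ) (h1 : ∫ s, φ s = 1)
    (hi1 : Integrable (fun s => s * φ s)) (t : ℝ) (ht : 0 ≤ t) :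
    (∫ s in Ioi t, s * φ s) ^ 2 / ((∫ s in Ioi t, φ s) * (1 - ∫ s in Ioi t, φ s)) ≤
    (∫ s in Ioi 0, s * φ s) ^ 2 / ((∫ s in Ioi 0, φ s) * (1 - ∫ s in Ioi 0, φ s)) := by
  set q : ℝ → ℝ := fun t => ∫ s in Ioi t, φ s with hq
  set h : ℝ → ℝ := fun t => ∫ s in Ioi t, s * φ s with hh
  have dq : ∀ t, HasDerivAt q (- φ t) t := tail_hasDeriv φ hc hi
  have dh : ∀ t, HasDerivAt h (- (t * φ t)) t :=
    tail_hasDeriv (fun s => s * φ s) (by fun_prop) hi1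
  have hcompl : ∀ t, ∫ s in Iic t, φ s = 1 - q t := by
    intro t
    have := integral_add_compl (measurableSet_Iic (a := t)) hi
    rw [compl_Iic, h1] at this
    simp only [hq]; linarith
  have q0 : q 0 = 1 / 2 := by
    have e1 := hcompl 0
    have e2 := integral_comp_neg_Iic (0:ℝ) φ
    simp only [hev, neg_zero] at e2
    have : q 0 = ∫ s in Ioi 0, φ s := rfl
    linarith
  have qpos : ∀ t, 0 < q t := by
    intro t
    refine (setIntegral_pos_iff_support_of_nonneg_ae ?_ hi.integrableOn).2 ?_
    · exact Filter.Eventually.of_forall fun s => (hp s).le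
    · have : Function.support φ = univ := by ext s; simp [(hp s).ne']
      simp [this]
  have hqle : ∀ t, t * q t ≤ h t := by
    intro t
    simp only [hq, hh]
    rw [← integral_const_mul]
    refine setIntegral_mono_on (hi.const_mul t).integrableOn hi1.integrableOn measurableSet_Ioi ?_
    intro s hs
    exact mul_le_mul_of_nonneg_right (le_of_lt hs) (hp s).le
  have hpos : ∀ t, 0 ≤ t → 0 ≤ h t := fun t ht => le_trans (mul_nonneg ht (qpos t).le) (hqle t)
  -- hazard
  have haz : ∀ t, 0 ≤ t → 2 * φ 0 * q t ≤ φ t := by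
    intro t ht
    have e : q t = ∫ x in Ioi 0, φ (t + x) := by
      have := (measurePreserving_add_left volume t).setIntegral_preimage_emb
        (measurableEmbedding_addLeft t) φ (Ioi t)
      rw [Set.preimage_const_add_Ioi, sub_self] at this
      exact this.symm
    have e2 : φ 0 * q t ≤ φ t * q 0 := by
      rw [e]; simp only [hq]
      rw [← integral_const_mul, ← integral_const_mul]
      refine setIntegral_mono_on ((hi.comp_add_left t).const_mul _).integrableOn
        (hi.const_mul _).integrableOn measurableSet_Ioi ?_
      intro x hx
      exact hlc t x ht (le_of_lt hx)
    rw [q0] at e2; linarith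
  have hq0 : Filter.Tendsto q Filter.atTop (nhds 0) := tail_tendsto_s17 φ hi
  have hh0 : Filter.Tendsto h Filter.atTop (nhds 0) := tail_tendsto_s17 _ hi1
  have htq : Filter.Tendsto (fun t => t * q t) Filter.atTop (nhds 0) := by
    refine tendsto_of_tendsto_of_tendsto_of_le_of_le' tendsto_const_nhds hh0 ?_ ?_
    · filter_upwards [Filter.eventually_ge_atTop 0] with t ht using mul_nonneg ht (qpos t).le
    · exact Filter.Eventually.of_forall hqle
  have key : ∀ t, 0 ≤ t → 2 * φ 0 * (h t - t * q t) ≤ q t := by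
    set D : ℝ → ℝ := fun t => q t - 2 * φ 0 * (h t - t * q t) with hD
    have dD : ∀ t, HasDerivAt D (- φ t + 2 * φ 0 * q t) t := by
      intro t
      have := (dq t).sub (((dh t).sub ((hasDerivAt_id t).mul (dq t))).const_mul (2 * φ 0))
      refine this.congr_deriv ?_
      simp
      try ring
    have anti : AntitoneOn D (Ici 0) := by
      refine antitoneOn_of_hasDerivWithinAt_nonpos (convex_Ici 0)
        (fun t _ => (dD t).continuousAt.continuousWithinAt)
        (fun t _ => (dD t).hasDerivWithinAt) ?_
      intro t ht
      rw [interior_Ici] at ht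
      have := haz t (le_of_lt ht)
      linarith
    have lim : Filter.Tendsto D Filter.atTop (nhds 0) := by
      have := hq0.sub ((hh0.sub htq).const_mul (2 * φ 0))
      simpa using this
    intro t ht
    have : 0 ≤ D t := by
      refine le_of_tendsto lim ?_
      filter_upwards [Filter.eventually_ge_atTop t] with s hs
      exact anti ht (ht.trans hs : (0:ℝ) ≤ s) hs
    simp only [hD] at this
    linarith
  have lin : ∀ t, 0 ≤ t → 1 - 2 * q t ≤ 2 * t * φ 0 := by
    have dE : ∀ t, HasDerivAt (fun t => q t + t * φ 0) (- φ t + φ 0) t := by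
      intro t
      have := (dq t).add ((hasDerivAt_id t).mul_const (φ 0))
      refine this.congr_deriv ?_
      simp
    have mono : Monotone (fun t => q t + t * φ 0) := by
      refine monotone_of_hasDerivAt_nonneg dE ?_
      intro t
      have := hmax t
      simp only [Pi.zero_apply]; linarith
    intro t ht
    have := mono ht
    simp only [q0] at this
    linarith
  have q1 : ∀ t, 0 < 1 - q t := by
    intro t
    rw [← hcompl]
    refine (setIntegral_pos_iff_support_of_nonneg_ae ?_ hi.integrableOn).2 ?_
    · exact Filter.Eventually.of_forall fun s => (hp s).le
    · have : Function.support φ = univ := by ext s; simp [(hp s).ne']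
      simp [this]
  set G : ℝ → ℝ := fun t => h t ^ 2 / (q t * (1 - q t)) with hG
  have dG : ∀ t, HasDerivAt G (((2 * h t * (-(t * φ t))) * (q t * (1 - q t)) -
      h t ^ 2 * (-φ t * (1 - 2 * q t))) / (q t * (1 - q t)) ^ 2) t := by
    intro t
    have := ((dh t).pow 2).div ((dq t).mul ((dq t).const_sub 1))
      (mul_pos (qpos t) (q1 t)).ne'
    refine this.congr_deriv ?_
    simp; ring
  have anti : AntitoneOn G (Ici 0) := by
    refine antitoneOn_of_hasDerivWithinAt_nonpos (convex_Ici 0)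
      (fun t _ => (dG t).continuousAt.continuousWithinAt)
      (fun t _ => (dG t).hasDerivWithinAt) ?_
    intro t ht
    rw [interior_Ici] at ht
    have ht : 0 ≤ t := le_of_lt ht
    refine div_nonpos_of_nonpos_of_nonneg ?_ (sq_nonneg _)
    have k1 : (h t - t * q t) * (1 - 2 * q t) ≤ t * q t := by
      calc (h t - t * q t) * (1 - 2 * q t) ≤ (h t - t * q t) * (2 * t * φ 0) :=
            mul_le_mul_of_nonneg_left (lin t ht) (sub_nonneg.2 (hqle t))
        _ = t * (2 * φ 0 * (h t - t * q t)) := by ring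
        _ ≤ t * q t := mul_le_mul_of_nonneg_left (key t ht) ht
    have k2 : 0 ≤ φ t * h t * (2 * t * q t * (1 - q t) - h t * (1 - 2 * q t)) := by
      refine mul_nonneg (mul_nonneg (hp t).le (hpos t ht)) ?_
      nlinarith
    nlinarith
  exact anti (Set.mem_Ici.2 le_rfl) ht ht

theorem oneD (φ : ℝ → ℝ) (hc : Continuous φ) (hp : ∀ s, 0 < φ s) (hev : ∀ s, φ (-s) = φ s)
    (hlc : ∀ s x, 0 ≤ s → 0 ≤ x → φ 0 * φ (s + x) ≤ φ s * φ x)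
    (hmax : ∀ s, φ s ≤ φ 0) (hi : Integrable φ) (h1 : ∫ s, φ s = 1)
    (hi1 : Integrable (fun s => s * φ s)) (t : ℝ) :
    (∫ s in Iic t, s * φ s) ^ 2 / ((∫ s in Iic t, φ s) * (1 - ∫ s in Iic t, φ s)) ≤
    (∫ s in Iic 0, s * φ s) ^ 2 / ((∫ s in Iic 0, φ s) * (1 - ∫ s in Iic 0, φ s)) := by
  have a1 : ∀ t, ∫ s in Iic t, φ s = ∫ s in Ioi (-t), φ s := by
    intro t
    have e2 := integral_comp_neg_Iic t φ
    simpa only [hev] using e2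
  have a2 : ∀ t, ∫ s in Iic t, s * φ s = - ∫ s in Ioi (-t), s * φ s := by
    intro t
    have e2 := integral_comp_neg_Iic t (fun s => s * φ s)
    rw [← e2, ← integral_neg]
    simp [hev]
  have b1 : ∀ t, ∫ s in Iic t, φ s = 1 - ∫ s in Ioi t, φ s := by
    intro t
    have := integral_add_compl (measurableSet_Iic (a := t)) hi
    rw [compl_Iic, h1] at this
    linarith
  have b2 : ∀ t, ∫ s in Iic t, s * φ s = - ∫ s in Ioi t, s * φ s := by
    intro t
    have z : ∫ s, s * φ s = 0 := by
      have := integral_neg_eq_self (fun s => s * φ s) volume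
      simp only [hev, neg_mul, integral_neg] at this
      linarith
    have := integral_add_compl (measurableSet_Iic (a := t)) hi1
    rw [compl_Iic, z] at this
    linarith
  have P := oneD_pos φ hc hp hev hlc hmax hi h1 hi1
  rw [a1 0, a2 0, neg_zero, neg_sq]
  rcases le_total 0 t with ht | ht
  · rw [b1 t, b2 t, neg_sq, mul_comm (1 - _), sub_sub_cancel]
    exact P t ht
  · rw [a1 t, a2 t, neg_sq]
    exact P (-t) (by linarith)

theorem map_withDensity_comp {E : Type*} [MeasurableSpace E] (ν : Measure E) (e : E ≃ᵐ E)
    (he : MeasurePreserving e ν ν) (f : E → ENNReal) :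
    Measure.map e (ν.withDensity (fun x => f (e x))) = ν.withDensity f := by
  ext s hs
  rw [Measure.map_apply e.measurable hs, withDensity_apply _ (e.measurable hs),
    withDensity_apply _ hs]
  exact he.setLIntegral_comp_preimage_emb e.measurableEmbedding f s

theorem involution_preserving {d : ℕ}
    (T : EuclideanSpace ℝ (Fin d) →ₗ[ℝ] EuclideanSpace ℝ (Fin d))
    (hT : ∀ y, T (T y) = y) : MeasurePreserving T volume volume := by
  have hcont : Continuous T := T.continuous_of_finiteDimensional
  refine ⟨hcont.measurable, ?_⟩
  have hd : LinearMap.det T * LinearMap.det T = 1 := by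
    rw [← LinearMap.det_comp]
    have : T ∘ₗ T = LinearMap.id := LinearMap.ext hT
    rw [this, LinearMap.det_id]
  have hne : LinearMap.det T ≠ 0 := by
    intro h; rw [h] at hd; simp at hd
  have habs : |(LinearMap.det T)⁻¹| = 1 := by
    rcases mul_self_eq_one_iff.1 hd with h | h <;> simp [h]
  rw [Measure.map_linearMap_addHaar_eq_smul_addHaar _ hne, habs]
  simp

theorem involution_law {d : ℕ}
    (T : EuclideanSpace ℝ (Fin d) →ₗ[ℝ] EuclideanSpace ℝ (Fin d))
    (hT : ∀ y, T (T y) = y) (f : EuclideanSpace ℝ (Fin d) → ENNReal)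
    (hf : ∀ y, f (T y) = f y) :
    Measure.map T (volume.withDensity f) = volume.withDensity f := by
  have hcont : Continuous T := T.continuous_of_finiteDimensional
  let e : EuclideanSpace ℝ (Fin d) ≃ᵐ EuclideanSpace ℝ (Fin d) :=
    { toFun := T, invFun := T, left_inv := hT, right_inv := hT
      measurable_toFun := hcont.measurable, measurable_invFun := hcont.measurable }
  have := map_withDensity_comp volume e (involution_preserving T hT) f
  have h2 : (fun x => f (e x)) = f := funext hf
  rw [h2] at this
  exact this

theorem even_of_law (V : ℝ → ℝ) (hV : Continuous V)
    (h : Measure.map (fun s : ℝ => -s) (volume.withDensity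
      (fun s => ENNReal.ofReal (Real.exp (-V s)))) =
      volume.withDensity (fun s => ENNReal.ofReal (Real.exp (-V s)))) (s : ℝ) : V (-s) = V s := by
  have h1 := map_withDensity_comp volume (MeasurableEquiv.neg ℝ)
    (Measure.measurePreserving_neg volume) (fun s => ENNReal.ofReal (Real.exp (-V (-s))))
  have e : (fun x : ℝ => ENNReal.ofReal (Real.exp (-V (-(MeasurableEquiv.neg ℝ x))))) =
      fun s => ENNReal.ofReal (Real.exp (-V s)) := by
    funext x
    change ENNReal.ofReal (Real.exp (-V (- -x))) = _
    rw [neg_neg]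
  rw [e] at h1
  have h2 : Measure.map (fun s : ℝ => -s) (volume.withDensity
      (fun s => ENNReal.ofReal (Real.exp (-V s)))) =
      volume.withDensity (fun s => ENNReal.ofReal (Real.exp (-V (-s)))) := h1
  rw [h] at h2
  rw [withDensity_eq_iff_of_sigmaFinite (by fun_prop) (by fun_prop)] at h2
  have h3 := (Continuous.ae_eq_iff_eq volume
    (ENNReal.continuous_ofReal.comp (by fun_prop)) (ENNReal.continuous_ofReal.comp (by fun_prop))).1 h2
  have h4 : ENNReal.ofReal (Real.exp (-V s)) = ENNReal.ofReal (Real.exp (-V (-s))) :=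
    congrFun h3 s
  rw [ENNReal.ofReal_eq_ofReal_iff (exp_pos _).le (exp_pos _).le] at h4
  have := Real.exp_injective h4
  linarith

/-- the one dimensional statement in terms of a law -/
theorem oneD_law (Q : Measure ℝ) [IsProbabilityMeasure Q] (V : ℝ → ℝ)
    (hV : ConvexOn ℝ Set.univ V)
    (hQ : Q = volume.withDensity (fun s => ENNReal.ofReal (Real.exp (-V s))))
    (hneg : Measure.map (fun s : ℝ => -s) Q = Q) (hint : Integrable (fun s => s) Q) (t : ℝ) :
    (∫ s in Iic t, s ∂Q) ^ 2 / (Q.real (Iic t) * (1 - Q.real (Iic t))) ≤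
    (∫ s in Iic 0, s ∂Q) ^ 2 / (Q.real (Iic 0) * (1 - Q.real (Iic 0))) := by
  have hc : Continuous V := by
    rw [← continuousOn_univ]; exact hV.continuousOn isOpen_univ
  have hm : Measurable (fun s => ENNReal.ofReal (Real.exp (-V s))) := by fun_prop
  have hev : ∀ s, V (-s) = V s := by
    apply even_of_law V hc; rw [← hQ]; exact hneg
  have hI : ∀ (g : ℝ → ℝ) (s : Set ℝ), MeasurableSet s →
      ∫ x in s, g x ∂Q = ∫ x in s, g x * exp (-V x) := by
    intro g s hs
    rw [hQ, setIntegral_withDensity_eq_setIntegral_toReal_smul hm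
      (Filter.Eventually.of_forall fun x => ENNReal.ofReal_lt_top) g hs]
    refine integral_congr_ae (Filter.Eventually.of_forall fun x => ?_)
    simp [ENNReal.toReal_ofReal (exp_pos _).le, mul_comm]
  have hInt : ∀ (g : ℝ → ℝ), Integrable g Q → Integrable (fun x => g x * exp (-V x)) := by
    intro g hg
    rw [hQ, integrable_withDensity_iff_integrable_smul' hm
      (Filter.Eventually.of_forall fun x => ENNReal.ofReal_lt_top)] at hg
    refine hg.congr (Filter.Eventually.of_forall fun x => ?_)
    simp [ENNReal.toReal_ofReal (exp_pos _).le, mul_comm]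
  have hr : ∀ s : Set ℝ, MeasurableSet s → Q.real s = ∫ x in s, exp (-V x) := by
    intro s hs
    have := hI (fun _ => 1) s hs
    simpa using this
  have hconv : ∀ s x, 0 ≤ s → 0 ≤ x → V s + V x ≤ V 0 + V (s + x) := by
    intro s x hs hx
    rcases eq_or_lt_of_le (add_nonneg hs hx) with h0 | h0
    · have : s = 0 := by linarith
      have : x = 0 := by linarith
      subst_vars; simp
    · have c1 := hV.2 (mem_univ 0) (mem_univ (s + x)) 
        (by positivity : 0 ≤ x / (s + x)) (by positivity : 0 ≤ s / (s + x)) (by field_simp; ring)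
      have c2 := hV.2 (mem_univ 0) (mem_univ (s + x)) 
        (by positivity : 0 ≤ s / (s + x)) (by positivity : 0 ≤ x / (s + x)) (by field_simp)
      have e1 : (x / (s + x)) • (0:ℝ) + (s / (s + x)) • (s + x) = s := by
        simp; field_simp
      have e2 : (s / (s + x)) • (0:ℝ) + (x / (s + x)) • (s + x) = x := by
        simp; field_simp
      rw [e1] at c1; rw [e2] at c2
      have e3 : x / (s + x) + s / (s + x) = 1 := by field_simp; ring
      simp only [smul_eq_mul] at c1 c2
      have e4 : x / (s + x) = 1 - s / (s + x) := by linarith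
      rw [e4] at c1 c2
      linarith
  have hmin : ∀ s, V 0 ≤ V s := by
    intro s
    have c1 := hV.2 (mem_univ s) (mem_univ (-s)) 
      (by norm_num : (0:ℝ) ≤ 1/2) (by norm_num : (0:ℝ) ≤ 1/2) (by norm_num)
    simp only [smul_eq_mul, hev] at c1
    have e : 1 / 2 * s + 1 / 2 * (-s) = 0 := by ring
    rw [e] at c1
    linarith
  have hi : Integrable (fun x => exp (-V x)) := by
    simpa using hInt (fun _ => 1) (integrable_const _)
  have := oneD (fun x => exp (-V x)) (by fun_prop) (fun s => exp_pos _) (fun s => by simp [hev])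
    (fun s x hs hx => by
      simp only [← Real.exp_add]
      apply Real.exp_le_exp.2
      have := hconv s x hs hx
      linarith)
    (fun s => Real.exp_le_exp.2 (by linarith [hmin s])) hi
    (by
      have := hr univ MeasurableSet.univ
      simpa using this.symm)
    (hInt (fun s => s) hint) t
  rw [hr _ measurableSet_Iic, hr _ measurableSet_Iic, hI _ _ measurableSet_Iic,
    hI _ _ measurableSet_Iic]
  exact this

theorem scatter_facts {d : ℕ} (S : Matrix (Fin d) (Fin d) ℝ) (hS : S.PosDef)
    (u : EuclideanSpace ℝ (Fin d)) (hu : u ≠ 0) :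
    0 < ⟪Matrix.toEuclideanLin S u, u⟫ ∧
      Matrix.toEuclideanLin S⁻¹ (Matrix.toEuclideanLin S u) = u ∧
      (Matrix.toEuclideanLin S⁻¹).IsSymmetric := by
  refine ⟨?_, ?_, ?_⟩
  · have hne : WithLp.ofLp u ≠ 0 := by
      intro h; apply hu; ext i; simp [h]
    have := hS.dotProduct_mulVec_pos hne
    rw [real_inner_comm, EuclideanSpace.inner_eq_star_dotProduct, dotProduct_comm]
    simpa [Matrix.ofLp_toEuclideanLin_apply] using this
  · have hdet : IsUnit S.det := hS.det_pos.ne'.isUnit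
    ext i
    simp [Matrix.toEuclideanLin_apply, Matrix.mulVec_mulVec, Matrix.nonsing_inv_mul S hdet]
  · rw [Matrix.isSymmetric_toEuclideanLin_iff]
    exact hS.inv.isHermitian

theorem main_aux {Ω : Type*} [MeasurableSpace Ω] {d : ℕ}
    (P : Measure Ω) [IsProbabilityMeasure P]
    (X : Ω → EuclideanSpace ℝ (Fin d)) (hX : Measurable X)
    (hX1 : Integrable X P)
    (μ : EuclideanSpace ℝ (Fin d)) (hμ : μ = ∫ ω, X ω ∂P)
    (u : EuclideanSpace ℝ (Fin d)) (t : ℝ) 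
    (hp0 : P.real {ω | ⟪X ω - μ, u⟫ ≤ t} ≠ 0) (hp1 : 1 - P.real {ω | ⟪X ω - μ, u⟫ ≤ t} ≠ 0) :
    halfspaceObjective P X μ u t = ‖μ‖ ^ 2 + ‖∫ ω in {ω | ⟪X ω - μ, u⟫ ≤ t}, (X ω - μ) ∂P‖ ^ 2 /
      (P.real {ω | ⟪X ω - μ, u⟫ ≤ t} * (1 - P.real {ω | ⟪X ω - μ, u⟫ ≤ t})) := by
  have hA : MeasurableSet {ω | ⟪X ω - μ, u⟫ ≤ t} :=
    measurableSet_le (by fun_prop) measurable_const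
  have hcompl : {ω | t < ⟪X ω - μ, u⟫} = {ω | ⟪X ω - μ, u⟫ ≤ t}ᶜ := by
    ext ω; simp
  unfold halfspaceObjective
  rw [hcompl]
  change _ / P.real _ + _ / P.real _ = _
  rw [probReal_compl_eq_one_sub hA]
  have hY : Integrable (fun ω => X ω - μ) P := hX1.sub (integrable_const _)
  have e0 : ∀ B : Set Ω, ∫ ω in B, X ω ∂P = ∫ ω in B, (X ω - μ) ∂P + P.real B • μ := by
    intro B
    rw [integral_sub hX1.integrableOn (integrable_const _)]
    simp
  have hz : ∫ ω, (X ω - μ) ∂P = 0 := by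
    rw [integral_sub hX1 (integrable_const _), ← hμ]; simp
  have e1 := integral_add_compl hA hY
  rw [hz] at e1
  have e2 := eq_neg_of_add_eq_zero_right e1
  rw [e0, e0 (_ᶜ), e2, probReal_compl_eq_one_sub hA]
  set p := P.real {ω | ⟪X ω - μ, u⟫ ≤ t}
  set m := ∫ ω in {ω | ⟪X ω - μ, u⟫ ≤ t}, (X ω - μ) ∂P
  have n1 : ‖m + p • μ‖ ^ 2 = ‖m‖ ^ 2 + 2 * (p * ⟪m, μ⟫) + p ^ 2 * ‖μ‖ ^ 2 := by
    rw [norm_add_sq_real, inner_smul_right, norm_smul, mul_pow]; simp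
  have n2 : ‖-m + (1 - p) • μ‖ ^ 2 = ‖m‖ ^ 2 - 2 * ((1 - p) * ⟪m, μ⟫) + (1 - p) ^ 2 * ‖μ‖ ^ 2 := by
    rw [norm_add_sq_real, inner_smul_right, norm_smul, mul_pow]; simp; ring
  rw [n1, n2]
  field_simp
  ring

/-- for an elliptical random vector `X` in `ℝ^d` with mean `μ`,
positive definite scatter matrix `Σ`, `E[‖X‖²] < ∞`, such that every projection
`⟨X − μ, u⟩` (for unit `u`) has a weakly symmetric log-concave density, the halfspace
objective satisfies `F(u, t) ≤ F(u, 0)` for every unit `u` and every admissible `t`. -/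
theorem halfspace_objective_maximized_at_mean {Ω : Type*} [MeasurableSpace Ω] {d : ℕ}
    (P : Measure Ω) [IsProbabilityMeasure P]
    (X : Ω → EuclideanSpace ℝ (Fin d)) (hX : Measurable X)
    (hX2 : Integrable (fun ω => ‖X ω‖ ^ 2) P)
    (μ : EuclideanSpace ℝ (Fin d)) (hμ : μ = ∫ ω, X ω ∂P)
    (S : Matrix (Fin d) (Fin d) ℝ) (hS : S.PosDef)
    (g : ℝ → ℝ) (hg : ∀ s, 0 ≤ g s) (C : ℝ) (hC : 0 < C)
    (hdens : Measure.map X P = volume.withDensity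
      (fun x => ENNReal.ofReal (C * g ⟪x - μ, Matrix.toEuclideanLin S⁻¹ (x - μ)⟫)))
    (hproj : ∀ u : EuclideanSpace ℝ (Fin d), ‖u‖ = 1 →
      ∃ V : ℝ → ℝ, ConvexOn ℝ Set.univ V
        ∧ Measure.map (fun ω => ⟪X ω - μ, u⟫) P
            = volume.withDensity (fun s => ENNReal.ofReal (Real.exp (-V s)))
        ∧ P {ω | ⟪X ω - μ, u⟫ ≤ ∫ ω', ⟪X ω' - μ, u⟫ ∂P} = 1 / 2) :
    ∀ u : EuclideanSpace ℝ (Fin d), ‖u‖ = 1 →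
      ∀ t : ℝ, 0 < P {ω | ⟪X ω - μ, u⟫ ≤ t} → P {ω | ⟪X ω - μ, u⟫ ≤ t} < 1 →
        halfspaceObjective P X μ u t ≤ halfspaceObjective P X μ u 0 := by
  intro u hu t ht0 ht1
  obtain ⟨V, hV, hlaw, hhalf⟩ := hproj u hu
  have hX1 : Integrable X P := by
    have : MemLp X 2 P := (memLp_two_iff_integrable_sq_norm hX.aestronglyMeasurable).2 hX2
    exact this.integrable (by norm_num)
  have hY : Integrable (fun ω => X ω - μ) P := hX1.sub (integrable_const _)
  have hYm : Measurable (fun ω => X ω - μ) := hX.sub_const μ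
  have hz : ∫ ω, (X ω - μ) ∂P = 0 := by
    rw [integral_sub hX1 (integrable_const _), ← hμ]; simp
  have hZi : Integrable (fun ω => ⟪X ω - μ, u⟫) P := hY.inner_const u
  have hZm : Measurable (fun ω => ⟪X ω - μ, u⟫) := by fun_prop
  have hZz : ∫ ω, ⟪X ω - μ, u⟫ ∂P = 0 := by
    have := integral_inner (𝕜 := ℝ) hY u
    simp_rw [real_inner_comm u]
    rw [this, hz, inner_zero_right]
  rw [hZz] at hhalf
  have hr0 : P.real {ω | ⟪X ω - μ, u⟫ ≤ 0} = 1 / 2 := by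
    rw [measureReal_def, hhalf]; simp
  have hrt0 : P.real {ω | ⟪X ω - μ, u⟫ ≤ t} ≠ 0 := by
    rw [measureReal_def]
    exact (ENNReal.toReal_pos ht0.ne' (measure_ne_top _ _)).ne'
  have hrt1 : 1 - P.real {ω | ⟪X ω - μ, u⟫ ≤ t} ≠ 0 := by
    have : P.real {ω | ⟪X ω - μ, u⟫ ≤ t} < 1 := by
      rw [measureReal_def]
      have := (ENNReal.toReal_lt_toReal (measure_ne_top _ _) ENNReal.one_ne_top).2 ht1
      simpa using this
    linarith
  rw [main_aux P X hX hX1 μ hμ u t hrt0 hrt1,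
    main_aux P X hX hX1 μ hμ u 0 (by rw [hr0]; norm_num) (by rw [hr0]; norm_num)]
  -- law of the centered vector
  set f0 : EuclideanSpace ℝ (Fin d) → ENNReal := fun y =>
    ENNReal.ofReal (C * g ⟪y, Matrix.toEuclideanLin S⁻¹ y⟫) with hf0
  have hν : Measure.map (fun ω => X ω - μ) P = volume.withDensity f0 := by
    have h1 := map_withDensity_comp volume (MeasurableEquiv.subRight μ)
      (measurePreserving_sub_right volume μ) f0
    have h2 : volume.withDensity (fun x => f0 (MeasurableEquiv.subRight μ x)) = Measure.map X P :=
      hdens.symm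
    rw [h2, Measure.map_map (MeasurableEquiv.measurable _) hX] at h1
    exact h1
  have hune : u ≠ 0 := by intro h; simp [h] at hu
  obtain ⟨hc, hinv, hsym⟩ := scatter_facts S hS u hune
  set w := Matrix.toEuclideanLin S u with hw
  set c := ⟪w, u⟫ with hcdef
  -- symmetry
  have hneg : Measure.map (fun y => -y) (volume.withDensity f0) = volume.withDensity f0 := by
    have := involution_law (-LinearMap.id) (by simp) f0 (by intro y; simp [hf0])
    exact this
  let T : EuclideanSpace ℝ (Fin d) →ₗ[ℝ] EuclideanSpace ℝ (Fin d) :=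
    ((2 / c) • (innerₛₗ ℝ u)).smulRight w - LinearMap.id
  have hTa : ∀ y, T y = (2 / c * ⟪u, y⟫) • w - y := by
    intro y; simp [T]
  have hTu : ∀ y, ⟪T y, u⟫ = ⟪y, u⟫ := by
    intro y
    rw [hTa, inner_sub_left, inner_smul_left, ← hcdef, real_inner_comm u y]
    simp; field_simp; ring
  have hTT : ∀ y, T (T y) = y := by
    intro y
    rw [hTa (T y), real_inner_comm (T y) u, hTu y, hTa y, real_inner_comm y u]; abel
  have hTlaw : Measure.map T (volume.withDensity f0) = volume.withDensity f0 := by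
    refine involution_law T hTT f0 ?_
    intro y
    have hwu : ⟪w, Matrix.toEuclideanLin S⁻¹ y⟫ = ⟪u, y⟫ := by
      rw [← hsym, hinv]
    have hyu : ⟪y, u⟫ = ⟪u, y⟫ := real_inner_comm _ _
    have : ⟪T y, Matrix.toEuclideanLin S⁻¹ (T y)⟫ = ⟪y, Matrix.toEuclideanLin S⁻¹ y⟫ := by
      rw [hTa, map_sub, map_smul, hinv]
      simp only [inner_sub_left, inner_sub_right, inner_smul_left, inner_smul_right, hwu, hyu,
        ← hcdef]
      simp; field_simp; ring
    simp only [hf0, this]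
  have hTc : Continuous T := T.continuous_of_finiteDimensional
  -- the truncated mean is a multiple of w
  have hm : ∀ t : ℝ, ∫ ω in {ω | ⟪X ω - μ, u⟫ ≤ t}, (X ω - μ) ∂P =
      ((∫ ω in {ω | ⟪X ω - μ, u⟫ ≤ t}, ⟪X ω - μ, u⟫ ∂P) / c) • w := by
    intro t
    have hB : MeasurableSet {y : EuclideanSpace ℝ (Fin d) | ⟪y, u⟫ ≤ t} :=
      measurableSet_le (by fun_prop) measurable_const
    set m := ∫ ω in {ω | ⟪X ω - μ, u⟫ ≤ t}, (X ω - μ) ∂P with hmdef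
    have m1 : m = ∫ y in {y | ⟪y, u⟫ ≤ t}, y ∂(volume.withDensity f0) := by
      rw [← hν, setIntegral_map hB (by fun_prop) hYm.aemeasurable]
      rfl
    have hid : IntegrableOn (fun y => y) {y | ⟪y, u⟫ ≤ t} (volume.withDensity f0) := by
      apply Integrable.integrableOn
      rw [← hν]
      exact (integrable_map_measure (by fun_prop) hYm.aemeasurable).2 hY
    have m2 : T m = m := by
      have a1 : T m = ∫ y in {y | ⟪y, u⟫ ≤ t}, T y ∂(volume.withDensity f0) := by
        rw [m1]
        exact ((LinearMap.toContinuousLinearMap T).integral_comp_comm hid).symm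
      rw [a1, m1]
      conv_rhs => rw [← hTlaw]
      rw [setIntegral_map hB (by fun_prop) hTc.measurable.aemeasurable]
      simp only [preimage_setOf_eq, hTu]
    have m3 : ⟪m, u⟫ = ∫ ω in {ω | ⟪X ω - μ, u⟫ ≤ t}, ⟪X ω - μ, u⟫ ∂P := by
      have := integral_inner (𝕜 := ℝ) (hY.integrableOn (s := {ω | ⟪X ω - μ, u⟫ ≤ t})) u
      rw [real_inner_comm u m, hmdef, ← this]
      exact integral_congr_ae (Filter.Eventually.of_forall fun ω => real_inner_comm _ _)
    rw [← m3]
    rw [hTa, real_inner_comm m u, sub_eq_iff_eq_add, ← two_smul ℝ m] at m2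
    have : (2:ℝ) • m = (2:ℝ) • ((⟪m, u⟫ / c) • w) := by
      rw [← m2, smul_smul]; congr 1; ring
    exact smul_right_injective _ (two_ne_zero) this
  set Q := Measure.map (fun ω => ⟪X ω - μ, u⟫) P with hQ
  have : IsProbabilityMeasure Q := Measure.isProbabilityMeasure_map hZm.aemeasurable
  have hQν : Q = Measure.map (fun y => ⟪y, u⟫) (volume.withDensity f0) := by
    rw [← hν, Measure.map_map (by fun_prop) hYm]; rfl
  have hQneg : Measure.map (fun s : ℝ => -s) Q = Q := by
    rw [hQν, Measure.map_map (by fun_prop) (by fun_prop)]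
    conv_rhs => rw [← hneg, Measure.map_map (by fun_prop) (by fun_prop)]
    congr 1
    funext y; simp
  have hQi : Integrable (fun s => s) Q :=
    (integrable_map_measure (by fun_prop) hZm.aemeasurable).2 hZi
  have main := oneD_law Q V hV hlaw hQneg hQi t
  have r1 : ∀ t, Q.real (Iic t) = P.real {ω | ⟪X ω - μ, u⟫ ≤ t} := by
    intro t
    rw [hQ, map_measureReal_apply hZm measurableSet_Iic]; rfl
  have r2 : ∀ t, ∫ s in Iic t, s ∂Q = ∫ ω in {ω | ⟪X ω - μ, u⟫ ≤ t}, ⟪X ω - μ, u⟫ ∂P := by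
    intro t
    rw [hQ, setIntegral_map measurableSet_Iic (by fun_prop) hZm.aemeasurable]; rfl
  simp only [r1, r2] at main
  rw [hm t, hm 0, norm_smul, norm_smul]
  have fin : ∀ k D : ℝ, (‖k / c‖ * ‖w‖) ^ 2 / D = (‖w‖ / c) ^ 2 * (k ^ 2 / D) := by
    intro k D
    rw [mul_pow, Real.norm_eq_abs, sq_abs]; ring
  rw [fin, fin]
  have := mul_le_mul_of_nonneg_left main (sq_nonneg (‖w‖ / c))
  linarith
end

section
/- Let X be a random vector in ℝ^d with E[‖X‖²] < ∞, mean μ, and an elliptical density x ↦ C·g((x − μ)ᵀΣ⁻¹(x − μ)) with respect to Lebesgue measure, Σ positive definite, such that every projection ⟨X − μ, u⟩ (u a unit vector) has a weakly symmetric log-concave density. With F(u, t) as defined by the halfspaces A_{u,t} = {x : ⟨x − μ, u⟩ ≤ t}, there holds F(u, 0) = ‖μ‖² + 4c₀²·(uᵀΣ²u)/(uᵀΣu) for all unit u, where c₀ = E[max(⟨X − μ, w⟩, 0)]/√(wᵀΣw) is independent of the unit vector w; consequently, the maximum of u ↦ F(u, 0) over unit vectors u is ‖μ‖² + 4c₀²·λ_max(Σ),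 attained exactly at the unit eigenvectors of Σ corresponding to the largest eigenvalue λ_max(Σ). -/
open MeasureTheory Real Set
open scoped RealInnerProductSpace

set_option linter.unusedSectionVars false

section HelperLemmas

variable {E : Type*} [NormedAddCommGroup E] [InnerProductSpace ℝ E] [FiniteDimensional ℝ E]
  [MeasurableSpace E] [BorelSpace E]

/-- Reflection for the quadratic form of the inverse of `T`. -/
noncomputable def hoRefl (T : E →ₗ[ℝ] E) (a : E) : E →ₗ[ℝ] E :=
  LinearMap.id - (2 / ⟪a, T a⟫) • ((innerₛₗ ℝ a).smulRight (T a))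

theorem hoRefl_apply (T : E →ₗ[ℝ] E) (a x : E) :
    hoRefl T a x = x - (2 / ⟪a, T a⟫ * ⟪a, x⟫) • T a := by
  simp [hoRefl, smul_smul]

theorem hoRefl_inner (T : E →ₗ[ℝ] E) (hT : T.IsSymmetric) (a x v : E) :
    ⟪hoRefl T a x, v⟫ = ⟪x, v - (2 / ⟪a, T a⟫ * ⟪a, T v⟫) • a⟫ := by
  rw [hoRefl_apply, inner_sub_left, inner_sub_right, inner_smul_left, inner_smul_right, hT a v,
    real_inner_comm a x]
  simp
  ring

theorem hoRefl_invol (T : E →ₗ[ℝ] E) (a : E) (ha : ⟪a, T a⟫ ≠ 0) (x : E) :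
    hoRefl T a (hoRefl T a x) = x := by
  simp only [hoRefl_apply, inner_sub_right, inner_smul_right, sub_sub, ← add_smul]
  have : 2 / ⟪a, T a⟫ * ⟪a, x⟫ + 2 / ⟪a, T a⟫ * (⟪a, x⟫ - 2 / ⟪a, T a⟫ * ⟪a, x⟫ * ⟪a, T a⟫) = 0 := by
    field_simp; ring
  rw [this]; simp

theorem hoRefl_form (T Ti : E →ₗ[ℝ] E) (hT : T.IsSymmetric) (h1 : ∀ x, T (Ti x) = x)
    (h2 : ∀ x, Ti (T x) = x) (a : E) (ha : ⟪a, T a⟫ ≠ 0) (x : E) :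
    ⟪hoRefl T a x, Ti (hoRefl T a x)⟫ = ⟪x, Ti x⟫ := by
  rw [hoRefl_apply, map_sub, map_smul, h2]
  simp only [inner_sub_left, inner_sub_right, inner_smul_left, inner_smul_right]
  rw [hT a (Ti x), h1, hT a a, real_inner_comm a x]
  simp
  field_simp
  ring

theorem hoRefl_volume (T : E →ₗ[ℝ] E) (a : E) (ha : ⟪a, T a⟫ ≠ 0) :
    MeasurePreserving (hoRefl T a) (volume : Measure E) volume := by
  refine ⟨(LinearMap.continuous_of_finiteDimensional _).measurable, ?_⟩
  have hsq : hoRefl T a * hoRefl T a = 1 := by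
    ext x; exact hoRefl_invol T a ha x
  have hd : LinearMap.det (hoRefl T a) * LinearMap.det (hoRefl T a) = 1 := by
    rw [← map_mul, hsq, map_one]
  have hd' : |LinearMap.det (hoRefl T a)| = 1 := by
    rcases mul_self_eq_one_iff.1 hd with h | h <;> simp [h]
  have hd0 : LinearMap.det (hoRefl T a) ≠ 0 := by
    intro h; simp [h] at hd
  rw [Measure.map_linearMap_addHaar_eq_smul_addHaar _ hd0, abs_inv, hd']
  simp

theorem hoRefl_law (T Ti : E →ₗ[ℝ] E) (hT : T.IsSymmetric) (h1 : ∀ x, T (Ti x) = x)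
    (h2 : ∀ x, Ti (T x) = x) (a : E) (ha : ⟪a, T a⟫ ≠ 0) (f : ℝ → ENNReal) (ν : Measure E)
    (hν : ν = volume.withDensity (fun z => f ⟪z, Ti z⟫)) :
    Measure.map (hoRefl T a) ν = ν := by
  have hm : Measurable (hoRefl T a) := (LinearMap.continuous_of_finiteDimensional _).measurable
  have hemb : MeasurableEmbedding (hoRefl T a) :=
    (MeasurableEquiv.mk ⟨hoRefl T a, hoRefl T a, hoRefl_invol T a ha, hoRefl_invol T a ha⟩
      hm hm).measurableEmbedding
  ext s hs
  rw [Measure.map_apply hm hs, hν, withDensity_apply _ hs, withDensity_apply _ (hm hs),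
    ← (hoRefl_volume T a ha).setLIntegral_comp_preimage_emb hemb _ s]
  simp only [hoRefl_form T Ti hT h1 h2 a ha]

theorem ho_integral_refl (T Ti : E →ₗ[ℝ] E) (hT : T.IsSymmetric) (h1 : ∀ x, T (Ti x) = x)
    (h2 : ∀ x, Ti (T x) = x) (a : E) (ha : ⟪a, T a⟫ ≠ 0) (f : ℝ → ENNReal) (ν : Measure E)
    (hν : ν = volume.withDensity (fun z => f ⟪z, Ti z⟫)) (φ : E → ℝ) (hφ : Measurable φ) :
    ∫ z, φ (hoRefl T a z) ∂ν = ∫ z, φ z ∂ν := by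
  conv_rhs => rw [← hoRefl_law T Ti hT h1 h2 a ha f ν hν]
  rw [integral_map (LinearMap.continuous_of_finiteDimensional _).measurable.aemeasurable
    hφ.aestronglyMeasurable]

theorem ho_shift (f : E → ENNReal) (μ : E) (ν : Measure E)
    (hν : ν = volume.withDensity (fun x => f (x - μ))) :
    Measure.map (fun x => x - μ) ν = volume.withDensity f := by
  have hm : Measurable (fun x : E => x - μ) := by fun_prop
  have hp : MeasurePreserving (fun x : E => x - μ) volume volume :=
    measurePreserving_sub_right volume μ
  ext s hs
  rw [Measure.map_apply hm hs, hν, withDensity_apply _ hs, withDensity_apply _ (hm hs),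
    ← hp.setLIntegral_comp_preimage_emb (MeasurableEquiv.subRight μ).measurableEmbedding _ s]

/-- orthogonality -/
theorem ho_orth (T Ti : E →ₗ[ℝ] E) (hT : T.IsSymmetric) (hpos : ∀ x, x ≠ 0 → 0 < ⟪x, T x⟫)
    (h1 : ∀ x, T (Ti x) = x)
    (h2 : ∀ x, Ti (T x) = x) (f : ℝ → ENNReal) (ν : Measure E)
    (hν : ν = volume.withDensity (fun z => f ⟪z, Ti z⟫)) (u a : E) (hau : ⟪a, T u⟫ = 0) :
    ∫ z, {z : E | 0 < ⟪z, u⟫}.indicator (fun z => ⟪z, a⟫) z ∂ν = 0 := by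
  by_cases ha : a = 0
  · simp [ha]
  have ha' := (hpos a ha).ne'
  have hms : MeasurableSet {z : E | 0 < ⟪z, u⟫} := measurableSet_lt (by fun_prop) (by fun_prop)
  have := ho_integral_refl T Ti hT h1 h2 a ha' f ν hν
    ({z : E | 0 < ⟪z, u⟫}.indicator (fun z => ⟪z, a⟫)) (Measurable.indicator (by fun_prop) hms)
  have h3 : ∀ z, {z : E | 0 < ⟪z, u⟫}.indicator (fun z => ⟪z, a⟫) (hoRefl T a z)
      = - {z : E | 0 < ⟪z, u⟫}.indicator (fun z => ⟪z, a⟫) z := by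
    intro z
    have e1 : ⟪hoRefl T a z, u⟫ = ⟪z, u⟫ := by
      rw [hoRefl_inner T hT, hau]; simp
    have e2 : ⟪hoRefl T a z, a⟫ = - ⟪z, a⟫ := by
      rw [hoRefl_inner T hT, div_mul_cancel₀ _ ha', ← inner_neg_right]
      congr 1
      module
    simp only [indicator, mem_ofPred_eq, e1, e2]
    split_ifs <;> simp
  simp only [h3, integral_neg] at this
  linarith

theorem ho_const (T Ti : E →ₗ[ℝ] E) (hT : T.IsSymmetric) (hpos : ∀ x, x ≠ 0 → 0 < ⟪x, T x⟫)
    (h1 : ∀ x, T (Ti x) = x)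
    (h2 : ∀ x, Ti (T x) = x) (f : ℝ → ENNReal) (ν : Measure E)
    (hν : ν = volume.withDensity (fun z => f ⟪z, Ti z⟫)) (u w : E) (huw : ⟪u, T u⟫ = ⟪w, T w⟫) :
    ∫ z, max ⟪z, u⟫ 0 ∂ν = ∫ z, max ⟪z, w⟫ 0 ∂ν := by
  by_cases ha : u - w = 0
  · rw [sub_eq_zero.1 ha]
  have ha' := (hpos _ ha).ne'
  rw [← ho_integral_refl T Ti hT h1 h2 (u - w) ha' f ν hν (fun z => max ⟪z, u⟫ 0) (by fun_prop)]
  congr 1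
  ext z
  rw [hoRefl_inner T hT]
  have : 2 / ⟪u - w, T (u - w)⟫ * ⟪u - w, T u⟫ = 1 := by
    field_simp
    simp only [map_sub, inner_sub_left, inner_sub_right]
    have : ⟪u, T w⟫ = ⟪w, T u⟫ := by rw [← hT, real_inner_comm]
    linarith
  rw [this]; simp

theorem ho_const' (T Ti : E →ₗ[ℝ] E) (hT : T.IsSymmetric) (hpos : ∀ x, x ≠ 0 → 0 < ⟪x, T x⟫)
    (h1 : ∀ x, T (Ti x) = x)
    (h2 : ∀ x, Ti (T x) = x) (f : ℝ → ENNReal) (ν : Measure E)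
    (hν : ν = volume.withDensity (fun z => f ⟪z, Ti z⟫)) (u w : E) (hu : u ≠ 0) (hw : w ≠ 0) :
    (∫ z, max ⟪z, u⟫ 0 ∂ν) / √⟪u, T u⟫ = (∫ z, max ⟪z, w⟫ 0 ∂ν) / √⟪w, T w⟫ := by
  have key : ∀ u : E, u ≠ 0 → (∫ z, max ⟪z, u⟫ 0 ∂ν) / √⟪u, T u⟫
      = ∫ z, max ⟪z, (√⟪u, T u⟫)⁻¹ • u⟫ 0 ∂ν := by
    intro u hu
    have : ∀ z, max ⟪z, (√⟪u, T u⟫)⁻¹ • u⟫ 0 = (√⟪u, T u⟫)⁻¹ * max ⟪z, u⟫ 0 := by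
      intro z
      rw [inner_smul_right, mul_max_of_nonneg _ _ (by positivity), mul_zero]
    simp only [this]
    rw [integral_const_mul, div_eq_inv_mul]
  have key2 : ∀ u : E, u ≠ 0 → ⟪(√⟪u, T u⟫)⁻¹ • u, T ((√⟪u, T u⟫)⁻¹ • u)⟫ = 1 := by
    intro u hu
    have := hpos u hu
    rw [map_smul, real_inner_smul_left, inner_smul_right, ← mul_assoc, ← mul_inv,
      Real.mul_self_sqrt this.le, inv_mul_cancel₀ this.ne']
  rw [key u hu, key w hw]
  exact ho_const T Ti hT hpos h1 h2 f ν hν _ _ (by rw [key2 u hu, key2 w hw])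

theorem ho_spec (T : E →ₗ[ℝ] E) (hT : T.IsSymmetric) (hpos : ∀ x, x ≠ 0 → 0 < ⟪x, T x⟫)
    (l : ℝ) (hl : ∀ m v, v ≠ 0 → T v = m • v → m ≤ l) (u : E) :
    ⟪T u, T u⟫ ≤ l * ⟪u, T u⟫ ∧ (⟪T u, T u⟫ = l * ⟪u, T u⟫ → T u = l • u) := by
  set b := hT.eigenvectorBasis rfl with hb
  set e := hT.eigenvalues rfl with he
  have hbe : ∀ i, T (b i) = e i • b i := fun i => hT.apply_eigenvectorBasis rfl i
  have hb0 : ∀ i, b i ≠ 0 := fun i => b.orthonormal.ne_zero i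
  have hel : ∀ i, e i ≤ l := fun i => hl _ _ (hb0 i) (hbe i)
  have hep : ∀ i, 0 < e i := by
    intro i
    have := hpos _ (hb0 i)
    rw [hbe, inner_smul_right, real_inner_self_eq_norm_sq, b.orthonormal.1 i] at this
    simpa using this
  have hc : ∀ i, ⟪b i, T u⟫ = e i * ⟪b i, u⟫ := by
    intro i
    rw [← hT, hbe, real_inner_smul_left]
  have hS : l * ⟪u, T u⟫ - ⟪T u, T u⟫ = ∑ i, e i * (l - e i) * ⟪b i, u⟫ ^ 2 := by
    rw [← b.sum_inner_mul_inner u (T u), ← b.sum_inner_mul_inner (T u) (T u), Finset.mul_sum,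
      ← Finset.sum_sub_distrib]
    refine Finset.sum_congr rfl fun i _ => ?_
    rw [real_inner_comm (b i) (T u), real_inner_comm (b i) u, hc]
    ring
  have hnn : ∀ i ∈ Finset.univ, 0 ≤ e i * (l - e i) * ⟪b i, u⟫ ^ 2 := fun i _ =>
    mul_nonneg (mul_nonneg (hep i).le (sub_nonneg.2 (hel i))) (sq_nonneg _)
  refine ⟨by have := Finset.sum_nonneg hnn; linarith, fun h => ?_⟩
  rw [h, sub_self, eq_comm, Finset.sum_eq_zero_iff_of_nonneg hnn] at hS
  apply b.repr.injective
  ext i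
  have := hS i (Finset.mem_univ i)
  rw [b.repr_apply_apply, b.repr_apply_apply, hc, inner_smul_right]
  rcases mul_eq_zero.1 this with h | h
  · rcases mul_eq_zero.1 h with h | h
    · exact absurd h (hep i).ne'
    · rw [sub_eq_zero.1 h]
  · rw [pow_eq_zero_iff two_ne_zero] at h
    rw [h]; simp

end HelperLemmas

/-- for an elliptical `X` with mean `μ`, positive definite scatter `Σ`,
`E[‖X‖²] < ∞`, and weakly symmetric log-concave projections, one has
`F(u,0) = ‖μ‖² + 4c₀²·(uᵀΣ²u)/(uᵀΣu)` for all unit `u`, where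
`c₀ = E[max(⟨X−μ,w⟩,0)]/√(wᵀΣw)` is independent of the unit vector `w`; consequently the
maximum of `u ↦ F(u,0)` over unit vectors is `‖μ‖² + 4c₀²·λ_max(Σ)`, attained exactly at the
unit eigenvectors of `Σ` for the largest eigenvalue `λ_max(Σ)`. -/
theorem halfspace_objective_optimal_direction {Ω : Type*} [MeasurableSpace Ω] {d : ℕ}
    (P : Measure Ω) [IsProbabilityMeasure P]
    (X : Ω → EuclideanSpace ℝ (Fin d)) (hX : Measurable X)
    (hX2 : Integrable (fun ω => ‖X ω‖ ^ 2) P)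
    (μ : EuclideanSpace ℝ (Fin d)) (hμ : μ = ∫ ω, X ω ∂P)
    (S : Matrix (Fin d) (Fin d) ℝ) (hS : S.PosDef)
    (g : ℝ → ℝ) (hg : ∀ s, 0 ≤ g s) (C : ℝ) (hC : 0 < C)
    (hdens : Measure.map X P = volume.withDensity
      (fun x => ENNReal.ofReal (C * g ⟪x - μ, Matrix.toEuclideanLin S⁻¹ (x - μ)⟫)))
    (hproj : ∀ u : EuclideanSpace ℝ (Fin d), ‖u‖ = 1 →
      ∃ V : ℝ → ℝ, ConvexOn ℝ Set.univ V
        ∧ Measure.map (fun ω => ⟪X ω - μ, u⟫) P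
            = volume.withDensity (fun s => ENNReal.ofReal (Real.exp (-V s)))
        ∧ P {ω | ⟪X ω - μ, u⟫ ≤ ∫ ω', ⟪X ω' - μ, u⟫ ∂P} = 1 / 2)
    (lmax : ℝ)
    (hlmax : IsGreatest
      {l : ℝ | ∃ v : EuclideanSpace ℝ (Fin d), v ≠ 0 ∧ Matrix.toEuclideanLin S v = l • v}
      lmax) :
    ∃ c₀ : ℝ,
      (∀ w : EuclideanSpace ℝ (Fin d), ‖w‖ = 1 →
        c₀ = (∫ ω, max ⟪X ω - μ, w⟫ 0 ∂P) / Real.sqrt ⟪w, Matrix.toEuclideanLin S w⟫)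
      ∧ (∀ u : EuclideanSpace ℝ (Fin d), ‖u‖ = 1 →
          halfspaceObjective P X μ u 0
            = ‖μ‖ ^ 2 + 4 * c₀ ^ 2 * ⟪u, Matrix.toEuclideanLin (S * S) u⟫
                / ⟪u, Matrix.toEuclideanLin S u⟫)
      ∧ IsGreatest {r : ℝ | ∃ u : EuclideanSpace ℝ (Fin d), ‖u‖ = 1
            ∧ halfspaceObjective P X μ u 0 = r}
          (‖μ‖ ^ 2 + 4 * c₀ ^ 2 * lmax)
      ∧ (∀ u : EuclideanSpace ℝ (Fin d), ‖u‖ = 1 →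
          (halfspaceObjective P X μ u 0 = ‖μ‖ ^ 2 + 4 * c₀ ^ 2 * lmax
            ↔ Matrix.toEuclideanLin S u = lmax • u)) := by
  set T := Matrix.toEuclideanLin S with hTdef
  set Ti := Matrix.toEuclideanLin S⁻¹ with hTidef
  have hdet : IsUnit S.det := hS.isUnit.map Matrix.detMonoidHom
  have hmul : ∀ A B : Matrix (Fin d) (Fin d) ℝ, ∀ x : EuclideanSpace ℝ (Fin d),
      Matrix.toEuclideanLin (A * B) x = Matrix.toEuclideanLin A (Matrix.toEuclideanLin B x) := by
    intro A B x
    simp [Matrix.toLpLin_apply, Matrix.mulVec_mulVec]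
  have hone : ∀ x : EuclideanSpace ℝ (Fin d), Matrix.toEuclideanLin (1 : Matrix (Fin d) (Fin d) ℝ) x = x := by
    intro x
    simp [Matrix.toLpLin_apply]
  have h1 : ∀ x, T (Ti x) = x := by
    intro x
    rw [hTdef, hTidef, ← hmul, Matrix.mul_nonsing_inv _ hdet, hone]
  have h2 : ∀ x, Ti (T x) = x := by
    intro x
    rw [hTdef, hTidef, ← hmul, Matrix.nonsing_inv_mul _ hdet, hone]
  have hT : T.IsSymmetric := Matrix.isSymmetric_toEuclideanLin_iff.2 hS.isHermitian
  have hpos : ∀ x, x ≠ 0 → 0 < ⟪x, T x⟫ := by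
    intro x hx
    have hx' : x.ofLp ≠ 0 := fun h => hx (by ext i; simpa using congrFun h i)
    have := hS.dotProduct_mulVec_pos hx'
    rw [EuclideanSpace.inner_eq_star_dotProduct, dotProduct_comm]
    exact this
  -- the law of Z
  have hZm : Measurable (fun ω => X ω - μ) := hX.sub_const μ
  set ν : Measure (EuclideanSpace ℝ (Fin d)) := Measure.map (fun ω => X ω - μ) P with hνdef
  set f : ℝ → ENNReal := fun s => ENNReal.ofReal (C * g s) with hf
  have hν : ν = volume.withDensity (fun z => f ⟪z, Ti z⟫) := by
    rw [← ho_shift (fun z => f ⟪z, Ti z⟫) μ (Measure.map X P) hdens,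
      Measure.map_map (by fun_prop) hX]
    rfl
  have hXi : Integrable X P := by
    have : MemLp X 2 P := (memLp_two_iff_integrable_sq_norm hX.aestronglyMeasurable).2 hX2
    exact this.integrable (by norm_num)
  have hZi : Integrable (fun ω => X ω - μ) P := hXi.sub (integrable_const μ)
  have hmax : ∀ w : EuclideanSpace ℝ (Fin d), ∫ ω, max ⟪X ω - μ, w⟫ 0 ∂P = ∫ z, max ⟪z, w⟫ 0 ∂ν := by
    intro w
    rw [hνdef, integral_map hZm.aemeasurable]
    exact Measurable.aestronglyMeasurable (by fun_prop)
  have hne : ∀ u : EuclideanSpace ℝ (Fin d), ‖u‖ = 1 → u ≠ 0 := by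
    rintro u hu rfl; simp at hu
  obtain ⟨⟨v, hv0, hv⟩, hub⟩ := hlmax
  have hl : ∀ m v, v ≠ 0 → T v = m • v → m ≤ lmax := fun m v h0 h => hub ⟨v, h0, h⟩
  set u₀ : EuclideanSpace ℝ (Fin d) := ‖v‖⁻¹ • v with hu₀
  have hu₀1 : ‖u₀‖ = 1 := by
    rw [hu₀, norm_smul, norm_inv, norm_norm, inv_mul_cancel₀ (norm_ne_zero_iff.2 hv0)]
  have hu₀T : T u₀ = lmax • u₀ := by
    rw [hu₀, map_smul, hv, smul_comm]
  set c₀ : ℝ := (∫ ω, max ⟪X ω - μ, u₀⟫ 0 ∂P) / √⟪u₀, T u₀⟫ with hc₀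
  have hc : ∀ w : EuclideanSpace ℝ (Fin d), ‖w‖ = 1 → c₀ = (∫ ω, max ⟪X ω - μ, w⟫ 0 ∂P) / √⟪w, T w⟫ := by
    intro w hw
    rw [hc₀, hmax, hmax]
    exact ho_const' T Ti hT hpos h1 h2 f ν hν _ _ (hne _ hu₀1) (hne _ hw)
  have hmean : ∀ u : EuclideanSpace ℝ (Fin d), ∫ ω, ⟪X ω - μ, u⟫ ∂P = 0 := by
    intro u
    have : ∫ ω, (X ω - μ) ∂P = 0 := by
      rw [integral_sub hXi (integrable_const μ), ← hμ]; simp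
    simp only [real_inner_comm u]
    rw [integral_inner hZi, this, inner_zero_right]
  have hms : ∀ u : EuclideanSpace ℝ (Fin d), MeasurableSet {ω | 0 < ⟪X ω - μ, u⟫} := fun u =>
    measurableSet_lt (by fun_prop) (by fun_prop)
  have hcompl : ∀ u : EuclideanSpace ℝ (Fin d), {ω | 0 < ⟪X ω - μ, u⟫}ᶜ = {ω | ⟪X ω - μ, u⟫ ≤ 0} := by
    intro u; ext ω; simp
  have hPle : ∀ u : EuclideanSpace ℝ (Fin d), ‖u‖ = 1 → P.real {ω | ⟪X ω - μ, u⟫ ≤ 0} = 1 / 2 := by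
    intro u hu
    obtain ⟨V, -, -, h⟩ := hproj u hu
    rw [hmean] at h
    rw [measureReal_def, h]; simp
  have hPgt : ∀ u : EuclideanSpace ℝ (Fin d), ‖u‖ = 1 → P.real {ω | 0 < ⟪X ω - μ, u⟫} = 1 / 2 := by
    intro u hu
    have h := hPle u hu
    rw [← hcompl, probReal_compl_eq_one_sub (hms u)] at h
    linarith
  have hmaxpos : ∀ u : EuclideanSpace ℝ (Fin d), ‖u‖ = 1 → 0 < ∫ ω, max ⟪X ω - μ, u⟫ 0 ∂P := by
    intro u hu
    have hi : Integrable (fun ω => max ⟪X ω - μ, u⟫ 0) P := (hZi.inner_const u).pos_part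
    refine (integral_pos_iff_support_of_nonneg (fun ω => le_max_right _ _) hi).2 ?_
    have : Function.support (fun ω => max ⟪X ω - μ, u⟫ 0) = {ω | 0 < ⟪X ω - μ, u⟫} := by
      ext ω; simp
    change 0 < P (Function.support (fun ω => max ⟪X ω - μ, u⟫ 0))
    rw [this, pos_iff_ne_zero]
    intro h0
    have := hPgt u hu
    rw [measureReal_def, h0] at this
    norm_num at this
  have hcpos : 0 < c₀ := div_pos (hmaxpos _ hu₀1) (Real.sqrt_pos.2 (hpos _ (hne _ hu₀1)))
  -- the half moment
  have hm : ∀ u : EuclideanSpace ℝ (Fin d), ‖u‖ = 1 → ∫ ω in {ω | 0 < ⟪X ω - μ, u⟫}, (X ω - μ) ∂P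
      = (c₀ / √⟪u, T u⟫) • T u := by
    intro u hu
    set m := ∫ ω in {ω | 0 < ⟪X ω - μ, u⟫}, (X ω - μ) ∂P with hmdef
    have hup := hpos u (hne u hu)
    have hin : ∀ a : EuclideanSpace ℝ (Fin d), ⟪a, m⟫ = ∫ ω in {ω | 0 < ⟪X ω - μ, u⟫}, ⟪X ω - μ, a⟫ ∂P := by
      intro a
      simp only [real_inner_comm a]
      rw [integral_inner hZi.integrableOn]
    have hmu : ⟪u, m⟫ = c₀ * √⟪u, T u⟫ := by
      rw [hin, hc u hu, div_mul_cancel₀ _ (Real.sqrt_pos.2 hup).ne', ← integral_indicator (hms u)]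
      congr 1
      ext ω
      by_cases h : 0 < ⟪X ω - μ, u⟫
      · rw [indicator_of_mem (by exact h), max_eq_left h.le]
      · rw [indicator_of_notMem (by exact h), max_eq_right (not_lt.1 h)]
    have horth : ∀ a : EuclideanSpace ℝ (Fin d), ⟪a, T u⟫ = 0 → ⟪a, m⟫ = 0 := by
      intro a ha
      refine Eq.trans ?_ (ho_orth T Ti hT hpos h1 h2 f ν hν u a ha)
      rw [hin, hνdef, integral_map hZm.aemeasurable, ← integral_indicator (hms u)]
      · rfl
      · refine (Measurable.indicator (by fun_prop) ?_).aestronglyMeasurable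
        exact measurableSet_lt (by fun_prop) (by fun_prop)
    refine ext_inner_left ℝ fun b => ?_
    have h3 := horth (b - (⟪b, T u⟫ / ⟪u, T u⟫) • u) (by
      rw [inner_sub_left, real_inner_smul_left]; field_simp; ring)
    rw [inner_sub_left, real_inner_smul_left, hmu, sub_eq_zero] at h3
    rw [h3, inner_smul_right]
    have hs := Real.mul_self_sqrt hup.le
    have hs0 := (Real.sqrt_pos.2 hup).ne'
    field_simp
    rw [pow_two, hs]
  have hF : ∀ u : EuclideanSpace ℝ (Fin d), ‖u‖ = 1 → halfspaceObjective P X μ u 0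
      = ‖μ‖ ^ 2 + 4 * c₀ ^ 2 * ⟪T u, T u⟫ / ⟪u, T u⟫ := by
    intro u hu
    have hup := hpos u (hne u hu)
    have hgt : ∫ ω in {ω | 0 < ⟪X ω - μ, u⟫}, X ω ∂P
        = (c₀ / √⟪u, T u⟫) • T u + (1 / 2 : ℝ) • μ := by
      rw [← hm u hu, integral_sub hXi.integrableOn (integrable_const μ).integrableOn,
        setIntegral_const, hPgt u hu]
      abel
    have hle : ∫ ω in {ω | ⟪X ω - μ, u⟫ ≤ 0}, X ω ∂P
        = (1 / 2 : ℝ) • μ - (c₀ / √⟪u, T u⟫) • T u := by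
      have := integral_add_compl (hms u) hXi
      rw [hcompl, hgt, ← hμ] at this
      rw [eq_sub_of_add_eq' this]
      module
    have e1 := hPle u hu
    have e2 := hPgt u hu
    rw [measureReal_def] at e1 e2
    rw [halfspaceObjective, hgt, hle, e1, e2, add_comm ((c₀ / √⟪u, T u⟫) • T u)]
    rw [norm_add_sq_real, norm_sub_sq_real, norm_smul, norm_smul, mul_pow, mul_pow,
      real_inner_self_eq_norm_sq, Real.norm_eq_abs, Real.norm_eq_abs, sq_abs, sq_abs, div_pow c₀,
      Real.sq_sqrt hup.le]
    ring
  have hub' : ∀ u : EuclideanSpace ℝ (Fin d), ‖u‖ = 1 →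
      halfspaceObjective P X μ u 0 ≤ ‖μ‖ ^ 2 + 4 * c₀ ^ 2 * lmax := by
    intro u hu
    have hup := hpos u (hne u hu)
    rw [hF u hu, mul_div_assoc]
    have := (ho_spec T hT hpos lmax hl u).1
    have : ⟪T u, T u⟫ / ⟪u, T u⟫ ≤ lmax := (div_le_iff₀ hup).2 this
    gcongr
  have hiff : ∀ u : EuclideanSpace ℝ (Fin d), ‖u‖ = 1 → (halfspaceObjective P X μ u 0 = ‖μ‖ ^ 2 + 4 * c₀ ^ 2 * lmax
            ↔ T u = lmax • u) := by
    intro u hu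
    have hup := hpos u (hne u hu)
    rw [hF u hu, mul_div_assoc, add_right_inj, mul_right_inj' (by positivity), div_eq_iff hup.ne']
    refine ⟨(ho_spec T hT hpos lmax hl u).2, fun h => ?_⟩
    conv_lhs => rw [h, real_inner_smul_left, ← h]
  refine ⟨c₀, hc, ?_, ⟨⟨u₀, hu₀1, (hiff u₀ hu₀1).2 hu₀T⟩, ?_⟩, hiff⟩
  · intro u hu
    rw [hF u hu, hmul, hT u (T u)]
  · rintro r ⟨u, hu, rfl⟩
    exact hub' u hu
end

section
/- Let X be the real random variable with density p(x) = 21/8 for |x| ≤ 1/10, p(x) = 1/8 for 1/10 < |x| ≤ 2, and p(x) = 0 otherwise. Then: (a) E[X] = 0; (b) p is not log-concave (e.g. p(0.15)² < p(0)·p(0.3)); (c) the function f_X(t) = E[X·1_{X≤t}]²/P(X ≤ t) + E[X·1_{X>t}]²/P(X > t) attains its global maximum on (−2, 2) exactly at the two points t = 2√5 − 4 and t = −(2√5 − 4); in particular f_X(t) < f_X(2√5 − 4) for all t ∈ (−2, 2) with t ≠ ±(2√5 − 4). -/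
open MeasureTheory Real Set

/-- The explicit symmetric step density: `21/8` on `[−1/10, 1/10]`, `1/8` on
`(1/10, 2] ∪ [−2, −1/10)`, and `0` outside `[−2, 2]`. -/
noncomputable def stepDensity (x : ℝ) : ℝ :=
  if |x| ≤ 1 / 10 then 21 / 8 else if |x| ≤ 2 then 1 / 8 else 0

lemma stepDensity_ae (x : ℝ) : ENNReal.ofReal (stepDensity x) =
    (Icc (-2:ℝ) 2).indicator (fun _ => ENNReal.ofReal (1/8)) x
    + (Icc (-(1/10):ℝ) (1/10)).indicator (fun _ => ENNReal.ofReal (5/2)) x := by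
  unfold stepDensity
  simp only [indicator, mem_Icc, ← abs_le]
  split_ifs with h1 h2 h3
  · rw [← ENNReal.ofReal_add (by norm_num) (by norm_num)]; norm_num
  · exfalso; linarith
  · simp
  · simp

lemma stepMeasure_eq : (volume : Measure ℝ).withDensity (fun x => ENNReal.ofReal (stepDensity x))
    = ENNReal.ofReal (1/8) • volume.restrict (Icc (-2:ℝ) 2)
      + ENNReal.ofReal (5/2) • volume.restrict (Icc (-(1/10):ℝ) (1/10)) := by
  have : (fun x => ENNReal.ofReal (stepDensity x)) =
      (Icc (-2:ℝ) 2).indicator (fun _ => ENNReal.ofReal (1/8))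
      + (Icc (-(1/10):ℝ) (1/10)).indicator (fun _ => ENNReal.ofReal (5/2)) := by
    funext x; exact stepDensity_ae x
  rw [this, withDensity_add_left (measurable_const.indicator measurableSet_Icc),
    withDensity_indicator measurableSet_Icc, withDensity_indicator measurableSet_Icc,
    withDensity_const, withDensity_const]

lemma int_Icc (a u : ℝ) (h : a ≤ u) : ∫ x in Icc a u, x = (u^2 - a^2)/2 := by
  rw [integral_Icc_eq_integral_Ioc, ← intervalIntegral.integral_of_le h, integral_id]

lemma Iic_inter (a t : ℝ) : Iic t ∩ Icc (-a) a = Icc (-a) (min t a) := by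
  ext x; simp only [mem_inter_iff, mem_Iic, mem_Icc, le_min_iff]; tauto

lemma vol_clamp (a t : ℝ) (ha : 0 < a) :
    (volume (Iic t ∩ Icc (-a) a)).toReal = max (-a) (min t a) + a := by
  rw [Iic_inter, Real.volume_Icc, ENNReal.toReal_ofReal', ← max_add_add_right]
  rw [max_comm]; simp

lemma int_clamp (a t : ℝ) (ha : 0 < a) :
    ∫ x in Iic t ∩ Icc (-a) a, x = ((max (-a) (min t a))^2 - a^2)/2 := by
  rw [Iic_inter]
  rcases le_total (-a) (min t a) with h | h
  · rw [int_Icc _ _ h, max_eq_right h]; ring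
  · rw [max_eq_left h, integral_Icc_eq_integral_Ioc, Ioc_eq_empty (not_lt.2 h)]; simp

lemma nu_Iic (t : ℝ) : ((volume.withDensity (fun x => ENNReal.ofReal (stepDensity x))) (Iic t)).toReal
    = 1/8 * (max (-2) (min t 2) + 2) + 5/2 * (max (-(1/10)) (min t (1/10)) + 1/10) := by
  rw [stepMeasure_eq]
  simp only [Measure.add_apply, Measure.smul_apply, smul_eq_mul,
    Measure.restrict_apply (measurableSet_Iic : MeasurableSet (Iic t))]
  rw [ENNReal.toReal_add, ENNReal.toReal_mul, ENNReal.toReal_mul, vol_clamp _ _ (by norm_num),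
    vol_clamp _ _ (by norm_num), ENNReal.toReal_ofReal (by norm_num),
    ENNReal.toReal_ofReal (by norm_num)]
  · rw [Iic_inter, Real.volume_Icc]; exact ENNReal.mul_ne_top (by simp) (by simp)
  · rw [Iic_inter, Real.volume_Icc]; exact ENNReal.mul_ne_top (by simp) (by simp)

lemma integrable_id_Icc (a b : ℝ) : Integrable (fun x : ℝ => x) (volume.restrict (Icc a b)) :=
  continuous_id.continuousOn.integrableOn_Icc

lemma integrable_nu : Integrable (fun x : ℝ => x)
    (volume.withDensity (fun x => ENNReal.ofReal (stepDensity x))) := by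
  rw [stepMeasure_eq]
  exact ((integrable_id_Icc _ _).smul_measure (by simp)).add_measure
    ((integrable_id_Icc _ _).smul_measure (by simp))

lemma int_nu : ∫ x, x ∂(volume.withDensity (fun x => ENNReal.ofReal (stepDensity x))) = 0 := by
  rw [stepMeasure_eq, integral_add_measure ((integrable_id_Icc _ _).smul_measure (by simp))
    ((integrable_id_Icc _ _).smul_measure (by simp)), integral_smul_measure,
    integral_smul_measure, int_Icc _ _ (by norm_num), int_Icc _ _ (by norm_num)]
  norm_num

lemma int_nu_Iic (t : ℝ) :
    ∫ x in Iic t, x ∂(volume.withDensity (fun x => ENNReal.ofReal (stepDensity x)))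
    = 1/8 * (((max (-2) (min t 2))^2 - 2^2)/2)
      + 5/2 * (((max (-(1/10)) (min t (1/10)))^2 - (1/10)^2)/2) := by
  rw [stepMeasure_eq, Measure.restrict_add, Measure.restrict_smul, Measure.restrict_smul,
    Measure.restrict_restrict measurableSet_Iic, Measure.restrict_restrict measurableSet_Iic]
  have h : ∀ a : ℝ, Integrable (fun x : ℝ => x) (volume.restrict (Iic t ∩ Icc (-a) a)) := by
    intro a; rw [Iic_inter]; exact integrable_id_Icc _ _
  rw [integral_add_measure ((h _).smul_measure (by simp))
    ((h _).smul_measure (by simp)), integral_smul_measure,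
    integral_smul_measure, int_clamp _ _ (by norm_num), int_clamp _ _ (by norm_num),
    ENNReal.toReal_ofReal (by norm_num), ENNReal.toReal_ofReal (by norm_num)]
  rfl

lemma objective_eq {Ω : Type*} [MeasurableSpace Ω]
    (P : Measure Ω) [IsProbabilityMeasure P] (X : Ω → ℝ) (hX : Measurable X)
    (hdens : Measure.map X P
      = volume.withDensity (fun x => ENNReal.ofReal (stepDensity x))) :
    (∫ ω, X ω ∂P = 0) ∧ ∀ t F M : ℝ,
      1/8 * (max (-2) (min t 2) + 2) + 5/2 * (max (-(1/10)) (min t (1/10)) + 1/10) = F →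
      1/8 * (((max (-2) (min t 2))^2 - 2^2)/2)
      + 5/2 * (((max (-(1/10)) (min t (1/10)))^2 - (1/10)^2)/2) = M →
      twoStepObjective P X t = M^2 / F + M^2 / (1-F) := by
  have h0 : ∫ ω, X ω ∂P = 0 := by
    have := integral_map (μ := P) hX.aemeasurable (f := fun x : ℝ => x)
      measurable_id.aestronglyMeasurable
    rw [← this, hdens, int_nu]
  have hint : Integrable X P := by
    have := integrable_nu
    rw [← hdens] at this
    exact this.comp_measurable hX
  refine ⟨h0, fun t F M hF hM => ?_⟩
  have hs : MeasurableSet {ω | X ω ≤ t} := hX measurableSet_Iic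
  have hc : {ω | t < X ω} = {ω | X ω ≤ t}ᶜ := by ext; simp
  have e1 : (P {ω | X ω ≤ t}).toReal = F := by
    rw [← hF, ← nu_Iic, ← hdens, Measure.map_apply hX measurableSet_Iic]; rfl
  have e2 : (P {ω | t < X ω}).toReal = 1 - F := by
    rw [hc, ← e1]; exact probReal_compl_eq_one_sub hs
  have e3 : ∫ ω in {ω | X ω ≤ t}, X ω ∂P = M := by
    rw [← hM, ← int_nu_Iic, ← hdens, setIntegral_map (f := fun x : ℝ => x) measurableSet_Iic
      measurable_id.aestronglyMeasurable hX.aemeasurable]; rfl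
  have e4 : ∫ ω in {ω | t < X ω}, X ω ∂P = - M := by
    have := integral_add_compl hs hint
    rw [hc]; linarith
  unfold twoStepObjective
  rw [e1, e2, e3, e4, neg_sq]

/-- for `X` with density `stepDensity`: (a) `E[X] = 0`; (b) the density is not
log-concave; (c) `f_X` attains its global maximum on `(−2, 2)` exactly at the two points
`±(2√5 − 4)`. -/
theorem step_density_two_maximizers {Ω : Type*} [MeasurableSpace Ω]
    (P : Measure Ω) [IsProbabilityMeasure P] (X : Ω → ℝ) (hX : Measurable X)
    (hdens : Measure.map X P
      = volume.withDensity (fun x => ENNReal.ofReal (stepDensity x))) :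
    (∫ ω, X ω ∂P = 0)
      ∧ ¬ (∀ x y θ : ℝ, 0 ≤ θ → θ ≤ 1 →
            stepDensity x ^ θ * stepDensity y ^ (1 - θ)
              ≤ stepDensity (θ * x + (1 - θ) * y))
      ∧ stepDensity 0.15 ^ 2 < stepDensity 0 * stepDensity 0.3
      ∧ twoStepObjective P X (-(2 * Real.sqrt 5 - 4))
          = twoStepObjective P X (2 * Real.sqrt 5 - 4)
      ∧ ∀ t ∈ Set.Ioo (-2 : ℝ) 2, t ≠ 2 * Real.sqrt 5 - 4 → t ≠ -(2 * Real.sqrt 5 - 4) →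
          twoStepObjective P X t < twoStepObjective P X (2 * Real.sqrt 5 - 4) := by
  obtain ⟨h0, hobj⟩ := objective_eq P X hX hdens
  have hb : stepDensity 0.15 ^ 2 < stepDensity 0 * stepDensity 0.3 := by
    have a1 : stepDensity 0.15 = 1/8 := by
      unfold stepDensity; rw [abs_of_pos (by norm_num)]; norm_num
    have a2 : stepDensity 0 = 21/8 := by
      unfold stepDensity; norm_num
    have a3 : stepDensity 0.3 = 1/8 := by
      unfold stepDensity; rw [abs_of_pos (by norm_num)]; norm_num
    rw [a1, a2, a3]; norm_num
  have hnn : ∀ x, 0 ≤ stepDensity x := by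
    intro x; unfold stepDensity; split_ifs <;> norm_num
  -- objective on the three pieces
  have hR : ∀ t : ℝ, 1/10 ≤ t → t < 2 →
      twoStepObjective P X t = (2-t)*(2+t)^2/(4*(6+t)) := by
    intro t h1 h2
    rw [hobj t ((6+t)/8) ((t^2-4)/16)
      (by rw [min_eq_left h2.le, min_eq_right h1, max_eq_right (by linarith),
            max_eq_right (by norm_num)]; ring)
      (by rw [min_eq_left h2.le, min_eq_right h1, max_eq_right (by linarith),
            max_eq_right (by norm_num)]; ring)]
    have p1 : 6 + t ≠ 0 := by linarith
    have p2 : 2 - t ≠ 0 := by linarith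
    have p3 : 1 - (6+t)/8 = (2-t)/8 := by ring
    rw [p3]; field_simp; ring
  have hL : ∀ t : ℝ, t ≤ -(1/10) → -2 < t →
      twoStepObjective P X t = (2-(-t))*(2+(-t))^2/(4*(6+(-t))) := by
    intro t h1 h2
    rw [hobj t ((2+t)/8) ((t^2-4)/16)
      (by rw [min_eq_left (by linarith), min_eq_left (by linarith), max_eq_right (by linarith),
            max_eq_left (by linarith)]; ring)
      (by rw [min_eq_left (by linarith), min_eq_left (by linarith), max_eq_right (by linarith),
            max_eq_left (by linarith)]; ring)]
    have p1 : 6 + -t ≠ 0 := by linarith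
    have p2 : 2 + t ≠ 0 := by linarith
    have p3 : 1 - (2+t)/8 = (6+-t)/8 := by ring
    rw [p3]; field_simp; ring
  have hM : ∀ t : ℝ, -(1/10) ≤ t → t ≤ 1/10 →
      twoStepObjective P X t = (21/5-21*t^2)^2/(64-1764*t^2) := by
    intro t h1 h2
    rw [hobj t (1/2+21/8*t) ((21*t^2-21/5)/16)
      (by rw [min_eq_left (by linarith), min_eq_left (by linarith), max_eq_right (by linarith),
            max_eq_right (by linarith)]; ring)
      (by rw [min_eq_left (by linarith), min_eq_left (by linarith), max_eq_right (by linarith),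
            max_eq_right (by linarith)]; ring)]
    have p1 : 4 + 21*t ≠ 0 := by linarith
    have p2 : 4 - 21*t ≠ 0 := by linarith
    have p3 : 1 - (1/2+21/8*t) = (4-21*t)/8 := by ring
    have p4 : 1/2+21/8*t = (4+21*t)/8 := by ring
    have p5 : 64-1764*t^2 = 4*((4+21*t)*(4-21*t)) := by ring
    rw [p3, p4, p5]; field_simp; ring
  have hs5 : Real.sqrt 5 ^ 2 = 5 := Real.sq_sqrt (by norm_num)
  have hs0 : 0 ≤ Real.sqrt 5 := Real.sqrt_nonneg 5
  have l1 : 2.236 < Real.sqrt 5 := Real.lt_sqrt_of_sq_lt (by norm_num)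
  have l2 : Real.sqrt 5 < 2.237 := by
    rw [Real.sqrt_lt' (by norm_num)]; norm_num
  norm_num at l1 l2
  set c : ℝ := 2 * Real.sqrt 5 - 4 with hc
  have hc2 : c^2 = 4 - 8*c := by rw [hc]; nlinarith
  have hc1 : 0.472 ≤ c := by rw [hc]; norm_num; linarith
  have hc3 : c ≤ 0.474 := by rw [hc]; norm_num; linarith
  clear_value c
  norm_num at hc1 hc3
  have hV : twoStepObjective P X c = 5*c-2 := by
    rw [hR c (by linarith) (by linarith), div_eq_iff (by linarith)]
    have e3 : c^3 = 4*c - 8*(4-8*c) := by rw [← hc2]; linear_combination c*hc2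
    ring_nf; rw [e3, hc2]; ring
  have key : ∀ t : ℝ, 1/10 ≤ t → t < 2 → t ≠ c →
      (2-t)*(2+t)^2/(4*(6+t)) < 5*c-2 := by
    intro t h1 h2 h3
    rw [div_lt_iff₀ (by linarith)]
    have p : 0 < (t-c)^2*(t+2*c+2) :=
      mul_pos (by have := sub_ne_zero.2 h3; positivity) (by linarith)
    have e : (5*c-2)*(4*(6+t)) - (2-t)*(2+t)^2 = (t-c)^2*(t+2*c+2) := by
      have e3 : c^3 = 4*c - 8*(4-8*c) := by rw [← hc2]; linear_combination c*hc2
      linear_combination (3*t-2)*hc2 - 2*e3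
    linarith
  refine ⟨h0, ?_, hb, ?_, ?_⟩
  · intro h
    have := h 0 0.3 (1/2) (by norm_num) (by norm_num)
    rw [show (1/2 * 0 + (1 - 1/2) * 0.3 : ℝ) = 0.15 by norm_num,
      show (1 - 1/2 : ℝ) = 1/2 by norm_num, ← Real.sqrt_eq_rpow, ← Real.sqrt_eq_rpow,
      ← Real.sqrt_mul (hnn _)] at this
    exact absurd hb (not_lt.2 ((Real.sqrt_le_left (hnn _)).1 this))
  · rw [hL (-c) (by linarith) (by linarith), hR c (by linarith) (by linarith), neg_neg]
  · intro t ht h1 h2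
    rw [hV]
    rcases le_total (1/10) t with h | h
    · rw [hR t h ht.2]; exact key t h ht.2 h1
    rcases le_total t (-(1/10)) with h' | h'
    · rw [hL t h' ht.1]
      exact key (-t) (by linarith) (by linarith [ht.1]) (fun e => h2 (by rw [← e, neg_neg]))
    · rw [hM t h' h]
      have ht2 : t^2 ≤ 1/100 := by nlinarith
      have ht0 : 0 ≤ t^2 := sq_nonneg t
      rw [div_lt_iff₀ (by linarith)]
      have : (36/100:ℝ) ≤ 5*c-2 := by linarith
      nlinarith [mul_nonneg ht0 (sub_nonneg.2 ht2), mul_nonneg (sub_nonneg.2 this) (by linarith : (0:ℝ) ≤ 64-1764*t^2)]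
end
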